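/- arXiv:math/9307205 — 2 statements merged into one kernel-verified Lean document; each statement's English description precedes it below -/
import Mathlib

section
/- (Rogers' bilinear / q-Mehler formula) For 0 < q < 1 and |t| < 1, Σ_{n=0}^{∞} t^n/(q;q)_n · H_n(cos θ|q) · H_n(cos φ|q) = (t²;q)_∞ / [(te^{i(θ+φ)};q)_∞ (te^{i(θ-φ)};q)_∞ (te^{-i(θ+φ)};q)_∞ (te^{-i(θ-φ)};q)_∞]. -/
/-- The continuous q-Hermite polynomials of Rogers. -/
noncomputable def qHermite (q : ℝ) : ℕ → Polynomial ℝ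
  | 0 => 1
  | 1 => Polynomial.C 2 * Polynomial.X
  | (n + 2) => Polynomial.C 2 * Polynomial.X * qHermite q (n + 1)
      - Polynomial.C (1 - q ^ (n + 1)) * qHermite q n

/-- `(q;q)_n = ∏_{j=1}^n (1 - q^j)`. -/
noncomputable def qPochN (q : ℝ) (m : ℕ) : ℝ := ∏ j ∈ Finset.range m, (1 - q ^ (j + 1))

/-- The infinite q-Pochhammer symbol `(a;q)_∞ = ∏_{k=0}^∞ (1 - a q^k)` for complex `a`. -/
noncomputable def qPochInfC (a : ℂ) (q : ℝ) : ℂ := ∏' k : ℕ, (1 - a * (q : ℂ) ^ k)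

lemma qHermite_eval_add_two (q x : ℝ) (n : ℕ) :
    (qHermite q (n + 2)).eval x =
      2 * x * (qHermite q (n + 1)).eval x - (1 - q ^ (n + 1)) * (qHermite q n).eval x := by
  simp [qHermite]

lemma qPochN_succ (q : ℝ) (n : ℕ) : qPochN q (n + 1) = qPochN q n * (1 - q ^ (n + 1)) := by
  simp [qPochN, Finset.prod_range_succ]

lemma one_sub_pow_succ_pos {q : ℝ} (hq0 : 0 < q) (hq1 : q < 1) (n : ℕ) :
    0 < 1 - q ^ (n + 1) :=
  sub_pos.2 (pow_lt_one₀ hq0.le hq1 n.succ_ne_zero)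

lemma qPochN_pos {q : ℝ} (hq0 : 0 < q) (hq1 : q < 1) (n : ℕ) : 0 < qPochN q n :=
  Finset.prod_pos fun j _ => one_sub_pow_succ_pos hq0 hq1 j

/-- The coefficient of `t ^ n` in the bilinear generating function of the `q`-Hermite
polynomials. -/
noncomputable def qMehlerCoeff (q x y : ℝ) (n : ℕ) : ℝ :=
  (qHermite q n).eval x * (qHermite q n).eval y / qPochN q n

lemma qMehlerCoeff_recurrence {q : ℝ} (hq0 : 0 < q) (hq1 : q < 1) (x y : ℝ) (n : ℕ) :
    qMehlerCoeff q x y (n + 4) - 4 * x * y * qMehlerCoeff q x y (n + 3)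
      + (4 * x ^ 2 + 4 * y ^ 2 - 2) * qMehlerCoeff q x y (n + 2)
      - 4 * x * y * qMehlerCoeff q x y (n + 1) + qMehlerCoeff q x y n =
    q ^ (n + 4) * qMehlerCoeff q x y (n + 4)
      - (1 + q) * q ^ (n + 2) * qMehlerCoeff q x y (n + 2)
      + q * q ^ n * qMehlerCoeff q x y n := by
  have h0 := (qPochN_pos hq0 hq1 n).ne'
  have h1 := (one_sub_pow_succ_pos hq0 hq1 n).ne'
  have h2 := (one_sub_pow_succ_pos hq0 hq1 (n + 1)).ne'
  have h3 := (one_sub_pow_succ_pos hq0 hq1 (n + 2)).ne'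
  have h4 := (one_sub_pow_succ_pos hq0 hq1 (n + 3)).ne'
  simp only [qMehlerCoeff, qPochN_succ, qHermite_eval_add_two]
  generalize (qHermite q n).eval x = a0
  generalize (qHermite q (n + 1)).eval x = a1
  generalize (qHermite q n).eval y = b0
  generalize (qHermite q (n + 1)).eval y = b1
  generalize qPochN q n = p at *
  simp only [add_assoc, Nat.reduceAdd, pow_add, pow_one] at *
  generalize q ^ n = Q at *
  field_simp
  ring

/-- A weighted size of two consecutive values of the `q`-Hermite polynomials at `cos θ`; its
growth rate is smaller than any `r > 1`. -/
noncomputable def qHermiteSize (q θ ε : ℝ) (n : ℕ) : ℝ :=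
  ‖(((qHermite q (n + 1)).eval (Real.cos θ) : ℝ) : ℂ)
      - Complex.exp (θ * Complex.I) * (((qHermite q n).eval (Real.cos θ) : ℝ) : ℂ)‖
    + ε * |(qHermite q n).eval (Real.cos θ)|

lemma qHermiteSize_nonneg (q θ : ℝ) {ε : ℝ} (hε : 0 < ε) (n : ℕ) : 0 ≤ qHermiteSize q θ ε n := by
  unfold qHermiteSize
  positivity

lemma abs_qHermite_eval_le (q θ : ℝ) {ε : ℝ} (hε : 0 < ε) (n : ℕ) :
    |(qHermite q n).eval (Real.cos θ)| ≤ ε⁻¹ * qHermiteSize q θ ε n := by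
  rw [le_inv_mul_iff₀ hε]
  exact le_add_of_nonneg_left (norm_nonneg _)

lemma qHermiteSize_succ_le {q : ℝ} (hq0 : 0 < q) (θ : ℝ) {ε : ℝ} (hε : 0 < ε) {n : ℕ}
    (hn : q ^ (n + 1) ≤ ε ^ 2) :
    qHermiteSize q θ ε (n + 1) ≤ (1 + ε) * qHermiteSize q θ ε n := by
  unfold qHermiteSize
  have hx : ((Real.cos θ : ℝ) : ℂ) =
      (Complex.exp (θ * Complex.I) + (Complex.exp (θ * Complex.I))⁻¹) / 2 := by
    rw [← Complex.exp_neg, Complex.ofReal_cos, Complex.cos, neg_mul]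
  have hwn : ‖Complex.exp (θ * Complex.I)‖ = 1 := Complex.norm_exp_ofReal_mul_I θ
  have hw0 : Complex.exp (θ * Complex.I) ≠ 0 := Complex.exp_ne_zero _
  have hrec := congrArg Complex.ofReal (qHermite_eval_add_two q (Real.cos θ) n)
  push_cast [-Complex.ofReal_cos] at hrec
  rw [hx] at hrec
  set w := Complex.exp (θ * Complex.I)
  set a := (qHermite q n).eval (Real.cos θ)
  set b := (qHermite q (n + 1)).eval (Real.cos θ)
  set c := (qHermite q (n + 1 + 1)).eval (Real.cos θ)
  have hd : (c : ℂ) - w * b = w⁻¹ * (b - w * a) + q ^ (n + 1) * a := by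
    rw [hrec]
    field_simp
    ring
  have h1 : ‖(c : ℂ) - w * b‖ ≤ ‖(b : ℂ) - w * a‖ + q ^ (n + 1) * |a| := by
    rw [hd]
    refine (norm_add_le _ _).trans_eq ?_
    simp [hwn, abs_of_pos hq0]
  have h2 : |b| ≤ ‖(b : ℂ) - w * a‖ + |a| := by
    have := norm_add_le ((b : ℂ) - w * a) (w * a)
    simpa [hwn] using this
  have h3 := mul_le_mul_of_nonneg_right hn (abs_nonneg a)
  have h4 := mul_le_mul_of_nonneg_left h2 hε.le
  linarith

lemma summable_qMehlerCoeff {q : ℝ} (hq0 : 0 < q) (hq1 : q < 1) (θ φ : ℝ) {t : ℂ}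
    (ht : ‖t‖ < 1) :
    Summable fun n => t ^ n * (qMehlerCoeff q (Real.cos θ) (Real.cos φ) n : ℂ) := by
  obtain ⟨ε, hε, hεt⟩ : ∃ ε : ℝ, 0 < ε ∧ ‖t‖ * (1 + ε) ^ 2 < 1 := by
    refine ⟨(1 - ‖t‖) / 4, by linarith, ?_⟩
    nlinarith [norm_nonneg t, mul_nonneg (norm_nonneg t) (norm_nonneg t)]
  obtain ⟨r, htr, hr1⟩ := exists_between hεt
  have hr0 : 0 < r := lt_of_le_of_lt (by positivity) htr
  have hpow : Filter.Tendsto (fun n : ℕ => q ^ (n + 1)) Filter.atTop (nhds 0) :=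
    (Filter.tendsto_add_atTop_iff_nat 1).2 (tendsto_pow_atTop_nhds_zero_of_lt_one hq0.le hq1)
  have hS : Summable fun n =>
      ‖t‖ ^ n / qPochN q n * qHermiteSize q θ ε n * qHermiteSize q φ ε n := by
    refine summable_of_ratio_norm_eventually_le hr1 ?_
    filter_upwards [hpow.eventually_le_const (show 0 < ε ^ 2 by positivity),
      hpow.eventually_le_const (show 0 < 1 - ‖t‖ * (1 + ε) ^ 2 / r by
        rw [sub_pos, div_lt_one hr0]; exact htr)] with n hn1 hn2
    have hp := qPochN_pos hq0 hq1 n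
    have hp1 := one_sub_pow_succ_pos hq0 hq1 n
    have hs := qHermiteSize_nonneg q θ hε
    have hs' := qHermiteSize_nonneg q φ hε
    rw [Real.norm_of_nonneg (mul_nonneg (mul_nonneg (div_nonneg (by positivity)
        (qPochN_pos hq0 hq1 _).le) (hs _)) (hs' _)),
      Real.norm_of_nonneg (mul_nonneg (mul_nonneg (div_nonneg (by positivity) hp.le)
        (hs _)) (hs' _)), qPochN_succ]
    have hratio : ‖t‖ * (1 + ε) ^ 2 / (1 - q ^ (n + 1)) ≤ r := by
      rw [div_le_iff₀ hp1, ← div_le_iff₀' hr0]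
      linarith
    calc ‖t‖ ^ (n + 1) / (qPochN q n * (1 - q ^ (n + 1))) * qHermiteSize q θ ε (n + 1)
            * qHermiteSize q φ ε (n + 1)
        ≤ ‖t‖ ^ (n + 1) / (qPochN q n * (1 - q ^ (n + 1))) * ((1 + ε) * qHermiteSize q θ ε n)
            * ((1 + ε) * qHermiteSize q φ ε n) := by
          have hA : 0 ≤ ‖t‖ ^ (n + 1) / (qPochN q n * (1 - q ^ (n + 1))) := by positivity
          exact mul_le_mul (mul_le_mul_of_nonneg_left (qHermiteSize_succ_le hq0 θ hε hn1) hA)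
            (qHermiteSize_succ_le hq0 φ hε hn1) (hs' _)
            (mul_nonneg hA (mul_nonneg (by positivity) (hs _)))
      _ = ‖t‖ * (1 + ε) ^ 2 / (1 - q ^ (n + 1)) *
            (‖t‖ ^ n / qPochN q n * qHermiteSize q θ ε n * qHermiteSize q φ ε n) := by
          field_simp
          ring
      _ ≤ _ := mul_le_mul_of_nonneg_right hratio
          (mul_nonneg (mul_nonneg (div_nonneg (by positivity) hp.le) (hs _)) (hs' _))
  refine (hS.mul_left (ε⁻¹ * ε⁻¹)).of_norm_bounded fun n => ?_
  have hp := qPochN_pos hq0 hq1 n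
  have h := mul_le_mul (abs_qHermite_eval_le q θ hε n) (abs_qHermite_eval_le q φ hε n)
    (abs_nonneg _) (mul_nonneg (inv_nonneg.2 hε.le) (qHermiteSize_nonneg q θ hε n))
  rw [norm_mul, norm_pow, Complex.norm_real, qMehlerCoeff, norm_div, norm_mul,
    Real.norm_of_nonneg hp.le, Real.norm_eq_abs, Real.norm_eq_abs]
  calc _ = ‖t‖ ^ n / qPochN q n * (|(qHermite q n).eval (Real.cos θ)|
          * |(qHermite q n).eval (Real.cos φ)|) := by ring
    _ ≤ ‖t‖ ^ n / qPochN q n * (ε⁻¹ * qHermiteSize q θ ε n * (ε⁻¹ * qHermiteSize q φ ε n)) :=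
        mul_le_mul_of_nonneg_left h (by positivity)
    _ = _ := by ring

lemma qMehler_functional_equation {q : ℝ} (hq0 : 0 < q) (hq1 : q < 1) (x y : ℝ) {t : ℂ}
    (hf : Summable fun n => t ^ n * (qMehlerCoeff q x y n : ℂ))
    (hg : Summable fun n => (t * q) ^ n * (qMehlerCoeff q x y n : ℂ)) :
    (1 - 4 * x * y * t + (4 * x ^ 2 + 4 * y ^ 2 - 2) * t ^ 2 - 4 * x * y * t ^ 3 + t ^ 4) *
        ∑' n, t ^ n * (qMehlerCoeff q x y n : ℂ) =
      (1 - t ^ 2) * (1 - t ^ 2 * q) * ∑' n, (t * q) ^ n * (qMehlerCoeff q x y n : ℂ) := by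
  set f : ℕ → ℂ := fun n => t ^ n * (qMehlerCoeff q x y n : ℂ) with hfdef
  set g : ℕ → ℂ := fun n => (t * q) ^ n * (qMehlerCoeff q x y n : ℂ) with hgdef
  have hF (k : ℕ) : HasSum (fun n => f (n + k)) (∑' n, f n - ∑ i ∈ Finset.range k, f i) :=
    (hasSum_nat_add_iff' k).2 hf.hasSum
  have hG (k : ℕ) : HasSum (fun n => g (n + k)) (∑' n, g n - ∑ i ∈ Finset.range k, g i) :=
    (hasSum_nat_add_iff' k).2 hg.hasSum
  have hl := ((((hF 4).sub ((hF 3).mul_left (4 * x * y * t))).add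
    ((hF 2).mul_left ((4 * x ^ 2 + 4 * y ^ 2 - 2) * t ^ 2))).sub
    ((hF 1).mul_left (4 * x * y * t ^ 3))).add ((hF 0).mul_left (t ^ 4))
  have hr := ((hG 4).sub ((hG 2).mul_left ((1 + q) * t ^ 2))).add
    ((hG 0).mul_left (q * t ^ 4))
  have hlr := hl.unique (hr.congr_fun ?_)
  · have h1 := (one_sub_pow_succ_pos hq0 hq1 0).ne'
    have h2 := (one_sub_pow_succ_pos hq0 hq1 1).ne'
    have h3 := (one_sub_pow_succ_pos hq0 hq1 2).ne'
    have c0 : qMehlerCoeff q x y 0 = 1 := by simp [qMehlerCoeff, qHermite, qPochN]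
    have c1 : q * qMehlerCoeff q x y 1 = qMehlerCoeff q x y 1 - 4 * x * y := by
      simp [qMehlerCoeff, qHermite, qPochN] at h1 h2 h3 ⊢
      field_simp
      ring
    have c2 : q ^ 2 * qMehlerCoeff q x y 2 = qMehlerCoeff q x y 2
        - 4 * x * y * qMehlerCoeff q x y 1 + (4 * x ^ 2 + 4 * y ^ 2 - 2) + (1 + q) := by
      simp [qMehlerCoeff, qHermite, qPochN, Finset.prod_range_succ] at h1 h2 h3 ⊢
      field_simp
      ring
    have c3 : q ^ 3 * qMehlerCoeff q x y 3 = qMehlerCoeff q x y 3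
        - 4 * x * y * qMehlerCoeff q x y 2
        + (4 * x ^ 2 + 4 * y ^ 2 - 2) * qMehlerCoeff q x y 1 - 4 * x * y
        + (1 + q) * q * qMehlerCoeff q x y 1 := by
      simp [qMehlerCoeff, qHermite, qPochN, Finset.prod_range_succ] at h1 h2 h3 ⊢
      field_simp
      ring
    replace c1 := congrArg (Complex.ofReal) c1
    replace c2 := congrArg (Complex.ofReal) c2
    replace c3 := congrArg (Complex.ofReal) c3
    push_cast at c1 c2 c3
    simp only [Finset.sum_range_succ, Finset.sum_range_zero, hfdef, hgdef, c0] at hlr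
    push_cast at hlr
    linear_combination hlr - t * c1 - t ^ 2 * c2 - t ^ 3 * c3
  · intro n
    have h := congrArg (Complex.ofReal) (qMehlerCoeff_recurrence hq0 hq1 x y n)
    push_cast at h
    simp only [hfdef, hgdef]
    linear_combination t ^ (n + 4) * h

lemma summable_norm_mul_pow {q : ℝ} (hq0 : 0 < q) (hq1 : q < 1) (a : ℂ) :
    Summable fun k : ℕ => ‖-(a * (q : ℂ) ^ k)‖ := by
  simpa [abs_of_pos hq0] using (summable_geometric_of_lt_one hq0.le hq1).mul_left ‖a‖

lemma tendsto_qPochInfC {q : ℝ} (hq0 : 0 < q) (hq1 : q < 1) (a : ℂ) :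
    Filter.Tendsto (fun N => ∏ k ∈ Finset.range N, (1 - a * (q : ℂ) ^ k)) Filter.atTop
      (nhds (qPochInfC a q)) := by
  have h := multipliable_one_add_of_summable (summable_norm_mul_pow hq0 hq1 a)
  simpa only [qPochInfC, ← sub_eq_add_neg] using h.hasProd.tendsto_prod_nat

lemma qPochInfC_ne_zero {q : ℝ} (hq0 : 0 < q) (hq1 : q < 1) {a : ℂ} (ha : ‖a‖ < 1) :
    qPochInfC a q ≠ 0 := by
  have h := tprod_one_add_ne_zero_of_summable (f := fun k : ℕ => -(a * (q : ℂ) ^ k)) ?_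
    (summable_norm_mul_pow hq0 hq1 a)
  · simpa only [qPochInfC, ← sub_eq_add_neg] using h
  · intro k h
    have h1 : a * (q : ℂ) ^ k = 1 := by linear_combination -h
    have h2 : ‖a‖ * q ^ k = 1 := by simpa [abs_of_pos hq0] using congrArg norm h1
    have h3 : q ^ k ≤ 1 := pow_le_one₀ hq0.le hq1.le
    nlinarith [norm_nonneg a, pow_pos hq0 k]

lemma prod_mul_prod_succ_eq_prod_two_mul {R : Type*} [CommMonoid R] (u : ℕ → R) (N : ℕ) :
    ∏ k ∈ Finset.range N, (u (2 * k) * u (2 * k + 1)) = ∏ j ∈ Finset.range (2 * N), u j := by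
  induction N with
  | zero => simp
  | succ N ih =>
    rw [Finset.prod_range_succ, ih, Nat.mul_succ, Finset.prod_range_succ, Finset.prod_range_succ,
      mul_assoc]

lemma norm_mul_ofReal_pow_le {q : ℝ} (hq0 : 0 < q) (hq1 : q < 1) (t : ℂ) (N : ℕ) :
    ‖t * (q : ℂ) ^ N‖ ≤ ‖t‖ := by
  simpa [abs_of_pos hq0] using
    mul_le_of_le_one_right (norm_nonneg t) (pow_le_one₀ (n := N) hq0.le hq1.le)

lemma tendsto_tsum_mul_pow {q : ℝ} (hq0 : 0 < q) (hq1 : q < 1) {t : ℂ} {c : ℕ → ℂ}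
    (hc : Summable fun n => t ^ n * c n) :
    Filter.Tendsto (fun N : ℕ => ∑' n, (t * (q : ℂ) ^ N) ^ n * c n) Filter.atTop
      (nhds (c 0)) := by
  have hlim : ∑' n, (0 : ℂ) ^ n * c n = c 0 := by
    rw [tsum_eq_single 0]
    · simp
    · intro n hn
      simp [hn]
  rw [← hlim]
  refine tendsto_tsum_of_dominated_convergence hc.norm (fun n => ?_) (.of_forall fun N n => ?_)
  · have h : Filter.Tendsto (fun N : ℕ => t * (q : ℂ) ^ N) Filter.atTop (nhds 0) := by
      have := tendsto_pow_atTop_nhds_zero_of_norm_lt_one (x := (q : ℂ))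
        (by simpa [abs_of_pos hq0] using hq1)
      simpa using this.const_mul t
    exact (h.pow n).mul_const _
  · rw [norm_mul, norm_mul, norm_pow, norm_pow]
    gcongr
    exact norm_mul_ofReal_pow_le hq0 hq1 t N

/-- Rogers' bilinear (q-Mehler) formula for the continuous q-Hermite polynomials. -/
theorem q_mehler_formula (q : ℝ) (hq0 : 0 < q) (hq1 : q < 1)
    (θ φ : ℝ) (t : ℂ) (ht : ‖t‖ < 1) :
    ∑' n : ℕ, t ^ n / (qPochN q n : ℂ) *
        (((qHermite q n).eval (Real.cos θ) : ℝ) : ℂ) *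
        (((qHermite q n).eval (Real.cos φ) : ℝ) : ℂ) =
      qPochInfC (t ^ 2) q /
        (qPochInfC (t * Complex.exp (Complex.I * (θ + φ))) q *
          qPochInfC (t * Complex.exp (Complex.I * (θ - φ))) q *
          qPochInfC (t * Complex.exp (-Complex.I * (θ + φ))) q *
          qPochInfC (t * Complex.exp (-Complex.I * (θ - φ))) q) := by
  set w := Complex.exp (Complex.I * θ) with hw
  set u := Complex.exp (Complex.I * φ) with hu
  have hw0 : w ≠ 0 := Complex.exp_ne_zero _
  have hu0 : u ≠ 0 := Complex.exp_ne_zero _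
  have hwn : ‖w‖ = 1 := by rw [hw, mul_comm, Complex.norm_exp_ofReal_mul_I]
  have hun : ‖u‖ = 1 := by rw [hu, mul_comm, Complex.norm_exp_ofReal_mul_I]
  have hx : ((Real.cos θ : ℝ) : ℂ) = (w + w⁻¹) / 2 := by
    rw [hw, ← Complex.exp_neg, Complex.ofReal_cos, Complex.cos]
    ring_nf
  have hy : ((Real.cos φ : ℝ) : ℂ) = (u + u⁻¹) / 2 := by
    rw [hu, ← Complex.exp_neg, Complex.ofReal_cos, Complex.cos]
    ring_nf
  have e1 : Complex.exp (Complex.I * (θ + φ)) = w * u := by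
    rw [hw, hu, ← Complex.exp_add]; ring_nf
  have e2 : Complex.exp (Complex.I * (θ - φ)) = w * u⁻¹ := by
    rw [hw, hu, ← Complex.exp_neg, ← Complex.exp_add]; ring_nf
  have e3 : Complex.exp (-Complex.I * (θ + φ)) = w⁻¹ * u⁻¹ := by
    rw [hw, hu, ← Complex.exp_neg, ← Complex.exp_neg, ← Complex.exp_add]; ring_nf
  have e4 : Complex.exp (-Complex.I * (θ - φ)) = w⁻¹ * u := by
    rw [hw, hu, ← Complex.exp_neg, ← Complex.exp_add]; ring_nf
  rw [e1, e2, e3, e4]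
  have hsum {s : ℂ} (hs : ‖s‖ < 1) := summable_qMehlerCoeff hq0 hq1 θ φ hs
  set F : ℂ → ℂ := fun s => ∑' n, s ^ n * (qMehlerCoeff q (Real.cos θ) (Real.cos φ) n : ℂ)
    with hF
  have hlhs : ∑' n : ℕ, t ^ n / (qPochN q n : ℂ) *
        (((qHermite q n).eval (Real.cos θ) : ℝ) : ℂ) *
        (((qHermite q n).eval (Real.cos φ) : ℝ) : ℂ) = F t := by
    refine tsum_congr fun n => ?_
    rw [qMehlerCoeff]
    push_cast
    ring
  have hstep {s : ℂ} (hs : ‖s‖ < 1) :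
      (1 - s * (w * u)) * (1 - s * (w * u⁻¹)) * (1 - s * (w⁻¹ * u⁻¹)) * (1 - s * (w⁻¹ * u)) * F s
        = (1 - s ^ 2) * (1 - s ^ 2 * q) * F (s * q) := by
    have hsq : ‖s * q‖ < 1 := by
      simpa using (norm_mul_ofReal_pow_le hq0 hq1 s 1).trans_lt hs
    rw [hF, ← qMehler_functional_equation hq0 hq1 _ _ (hsum hs) (hsum hsq), hx, hy]
    congr 1
    field_simp
    ring
  have hiter (N : ℕ) :
      (∏ k ∈ Finset.range N, (1 - t * (w * u) * (q : ℂ) ^ k)) *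
        (∏ k ∈ Finset.range N, (1 - t * (w * u⁻¹) * (q : ℂ) ^ k)) *
        (∏ k ∈ Finset.range N, (1 - t * (w⁻¹ * u⁻¹) * (q : ℂ) ^ k)) *
        (∏ k ∈ Finset.range N, (1 - t * (w⁻¹ * u) * (q : ℂ) ^ k)) * F t =
      (∏ k ∈ Finset.range (2 * N), (1 - t ^ 2 * (q : ℂ) ^ k)) * F (t * (q : ℂ) ^ N) := by
    rw [← prod_mul_prod_succ_eq_prod_two_mul]
    induction N with
    | zero => simp
    | succ N ih =>
      have h := hstep ((norm_mul_ofReal_pow_le hq0 hq1 t N).trans_lt ht)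
      simp only [Finset.prod_range_succ]
      rw [pow_succ (q : ℂ) N, ← mul_assoc t ((q : ℂ) ^ N)]
      generalize F (t * (q : ℂ) ^ N * q) = F₁ at *
      generalize F (t * (q : ℂ) ^ N) = F₀ at *
      generalize ∏ k ∈ Finset.range N, (1 - t * (w * u) * (q : ℂ) ^ k) = A at *
      generalize ∏ k ∈ Finset.range N, (1 - t * (w * u⁻¹) * (q : ℂ) ^ k) = B at *
      generalize ∏ k ∈ Finset.range N, (1 - t * (w⁻¹ * u⁻¹) * (q : ℂ) ^ k) = C at *
      generalize ∏ k ∈ Finset.range N, (1 - t * (w⁻¹ * u) * (q : ℂ) ^ k) = D at *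
      generalize ∏ k ∈ Finset.range N,
        ((1 - t ^ 2 * (q : ℂ) ^ (2 * k)) * (1 - t ^ 2 * (q : ℂ) ^ (2 * k + 1))) = E at *
      generalize w⁻¹ = w' at *
      generalize u⁻¹ = u' at *
      linear_combination
        (1 - t * (w * u) * (q : ℂ) ^ N) * (1 - t * (w * u') * (q : ℂ) ^ N) *
          (1 - t * (w' * u') * (q : ℂ) ^ N) * (1 - t * (w' * u) * (q : ℂ) ^ N) * ih + E * h
  have hc0 : (qMehlerCoeff q (Real.cos θ) (Real.cos φ) 0 : ℂ) = 1 := by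
    simp [qMehlerCoeff, qHermite, qPochN]
  have hT := tendsto_qPochInfC hq0 hq1
  have hleft := ((((hT (t * (w * u))).mul (hT (t * (w * u⁻¹)))).mul
    (hT (t * (w⁻¹ * u⁻¹)))).mul (hT (t * (w⁻¹ * u)))).mul_const (F t)
  have hright := ((hT (t ^ 2)).comp
    (Filter.tendsto_id.const_mul_atTop' (two_pos : (0 : ℕ) < 2))).mul
    (tendsto_tsum_mul_pow hq0 hq1 (hsum ht))
  have hlim := tendsto_nhds_unique hleft (hright.congr fun N => (hiter N).symm)
  rw [hc0, mul_one] at hlim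
  have hne {v : ℂ} (hv : ‖v‖ = 1) : qPochInfC (t * v) q ≠ 0 :=
    qPochInfC_ne_zero hq0 hq1 (by rwa [norm_mul, hv, mul_one])
  rw [hlhs, eq_div_iff, ← hlim]
  · ring
  · exact mul_ne_zero (mul_ne_zero (mul_ne_zero (hne (by simp [hwn, hun]))
      (hne (by simp [hwn, hun]))) (hne (by simp [hwn, hun]))) (hne (by simp [hwn, hun]))
end

section
/- (Inversion relation for the q-Fourier kernel) For real r, r' with |r|, |r'| < 1, ∫_{-1}^{1} K_{ir}(x,y;q) K*_{ir'}(y,x';q) dy = K_{rr'}(x,x';q); consequently, for any finite linear combination f of the wave functions ψ_n, lim_{r,r'→1⁻} ∫_{-1}^{1} K*_{ir'}(x,y;q) ∫_{-1}^{1} K_{ir}(y,z;q) f(z) dz dy = f(x). -/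
open scoped Real

/-- The q-Hermite weight function. -/
noncomputable def qWeight (q x : ℝ) : ℝ :=
  4 * Real.sqrt (1 - x ^ 2) *
    ∏' j : ℕ, (1 - 2 * (2 * x ^ 2 - 1) * q ^ (j + 1) + q ^ (2 * (j + 1)))

/-- The infinite q-Pochhammer symbol `(a;q)_∞ = ∏_{k=0}^∞ (1 - a q^k)`. -/
noncomputable def qPochInfA (a q : ℝ) : ℝ := ∏' k : ℕ, (1 - a * q ^ k)

/-- The q-wave functions `ψ_n(x) = α d_n⁻¹ ρ(x)^{1/2} H_n(x|q)`, where
`α = ((1-q)/2)^{1/4}` and `d_n⁻¹ = ((q^{n+1};q)_∞ / (2π))^{1/2}`. -/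
noncomputable def qWave (q : ℝ) (n : ℕ) (x : ℝ) : ℝ :=
  ((1 - q) / 2) ^ ((1 : ℝ) / 4) * Real.sqrt (qPochInfA (q ^ (n + 1)) q / (2 * π)) *
    Real.sqrt (qWeight q x) * (qHermite q n).eval x

/-- The q-Poisson kernel `K_t(x,y;q) = α⁻² Σ_{n=0}^∞ tⁿ ψ_n(x) ψ_n(y)`,
with `α⁻² = ((1-q)/2)^{-1/2}`. -/
noncomputable def qKernel (q : ℝ) (t : ℂ) (x y : ℝ) : ℂ :=
  (Real.sqrt (2 / (1 - q)) : ℂ) *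
    ∑' n : ℕ, t ^ n * (qWave q n x : ℂ) * (qWave q n y : ℂ)

/-- The finite `q`-Pochhammer symbol `(q;q)_n = ∏_{i=1}^n (1 - q^i)`. -/
noncomputable def qFact (q : ℝ) (n : ℕ) : ℝ := ∏ i ∈ Finset.range n, (1 - q ^ (i + 1))

lemma qFact_succ (q : ℝ) (n : ℕ) : qFact q (n + 1) = qFact q n * (1 - q ^ (n + 1)) :=
  Finset.prod_range_succ _ _

lemma qFact_pos {q : ℝ} (hq0 : 0 < q) (hq1 : q < 1) (n : ℕ) : 0 < qFact q n :=
  Finset.prod_pos fun i _ => sub_pos.2 (pow_lt_one₀ hq0.le hq1 (Nat.succ_ne_zero i))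

lemma qFact_le_one {q : ℝ} (hq0 : 0 < q) (hq1 : q < 1) (n : ℕ) : qFact q n ≤ 1 :=
  Finset.prod_le_one (fun i _ => sub_nonneg.2 (pow_le_one₀ hq0.le hq1.le))
    fun i _ => sub_le_self _ (by positivity)

lemma qFact_succ_ne {q : ℝ} (hq0 : 0 < q) (hq1 : q < 1) (n : ℕ) :
    (qFact q n : ℂ) ≠ 0 ∧ (1 - (q : ℂ) ^ (n + 1)) ≠ 0 := by
  have h := (qFact_pos hq0 hq1 (n + 1)).ne'
  rw [qFact_succ] at h
  exact ⟨mod_cast left_ne_zero_of_mul h, mod_cast right_ne_zero_of_mul h⟩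

open PowerSeries in
/-- The `q`-exponential series `∑ zⁿ Xⁿ / (q;q)_n = 1 / (zX;q)_∞`. -/
noncomputable def qExpSeries (q : ℝ) (z : ℂ) : PowerSeries ℂ := mk fun n => z ^ n / qFact q n

open PowerSeries in
/-- The series `∑ (-s)ⁿ q^{n(n-1)/2} Xⁿ / (q;q)_n = (sX;q)_∞`, written with `q = p²`. -/
noncomputable def qExpSeriesInv (p : ℝ) (s : ℂ) : PowerSeries ℂ :=
  mk fun n => (-s) ^ n * (p : ℂ) ^ ((n : ℤ) * (n - 1)) / qFact (p ^ 2) n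

open PowerSeries in
lemma rescale_qExpSeries {q : ℝ} (hq0 : 0 < q) (hq1 : q < 1) (z : ℂ) :
    rescale (q : ℂ) (qExpSeries q z) = (1 - C z * X) * qExpSeries q z := by
  ext n
  rw [coeff_rescale, sub_mul, one_mul, map_sub, mul_assoc, coeff_C_mul]
  rcases n with _ | n
  · simp [qExpSeries]
  · obtain ⟨h1, h2⟩ := qFact_succ_ne hq0 hq1 n
    rw [coeff_succ_X_mul]
    simp only [qExpSeries, coeff_mk, qFact_succ]
    push_cast
    field_simp
    ring

open PowerSeries in
lemma rescale_qExpSeriesInv {p : ℝ} (hp0 : 0 < p) (hp1 : p < 1) (s : ℂ) :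
    (1 - C s * X) * rescale ((p ^ 2 : ℝ) : ℂ) (qExpSeriesInv p s) = qExpSeriesInv p s := by
  have hq0 : 0 < p ^ 2 := by positivity
  have hq1 : p ^ 2 < 1 := by nlinarith
  have hp : (p : ℂ) ≠ 0 := mod_cast hp0.ne'
  ext n
  rw [sub_mul, one_mul, map_sub, mul_assoc, coeff_C_mul, coeff_rescale]
  rcases n with _ | n
  · simp
  · obtain ⟨h1, h2⟩ := qFact_succ_ne hq0 hq1 n
    rw [coeff_succ_X_mul, coeff_rescale]
    simp only [qExpSeriesInv, coeff_mk, qFact_succ]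
    have e : (p : ℂ) ^ (((n + 1 : ℕ) : ℤ) * ((n + 1 : ℕ) - 1))
        = (p : ℂ) ^ ((n : ℤ) * (n - 1)) * ((p : ℂ) ^ 2) ^ n := by
      rw [← pow_mul, ← zpow_natCast (p : ℂ) (2 * n), ← zpow_add₀ hp]
      congr 1
      push_cast
      ring
    rw [e]
    push_cast at *
    field_simp
    ring

open PowerSeries in
/-- The finite `q`-binomial theorem. -/
lemma qBinomial {p : ℝ} (hp0 : 0 < p) (hp1 : p < 1) (s : ℂ) (n : ℕ) :
    ∑ ij ∈ Finset.HasAntidiagonal.antidiagonal n,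
      (qFact (p ^ 2) n : ℂ) / (qFact (p ^ 2) ij.1 * qFact (p ^ 2) ij.2)
      * ((-s) ^ ij.1 * (p : ℂ) ^ ((ij.1 : ℤ) * (ij.1 - 1)))
      = ∏ i ∈ Finset.range n, (1 - s * ((p : ℂ) ^ 2) ^ i) := by
  have hq0 : 0 < p ^ 2 := by positivity
  have hq1 : p ^ 2 < 1 := by nlinarith
  set G := qExpSeriesInv p s * qExpSeries (p ^ 2) 1 with hG
  have key : (1 - C s * X) * rescale ((p ^ 2 : ℝ) : ℂ) G = (1 - X) * G := by
    rw [hG, map_mul, rescale_qExpSeries hq0 hq1, ← mul_assoc, rescale_qExpSeriesInv hp0 hp1]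
    simp only [map_one]
    ring
  have hc : ∀ n, (qFact (p ^ 2) n : ℂ) * coeff n G
      = ∏ i ∈ Finset.range n, (1 - s * ((p : ℂ) ^ 2) ^ i) := by
    intro n
    induction n with
    | zero => simp [hG, qExpSeries, qExpSeriesInv, qFact]
    | succ n ih =>
      have := congrArg (coeff (n + 1)) key
      simp only [sub_mul, one_mul, map_sub, mul_assoc, coeff_C_mul, coeff_rescale,
        coeff_succ_X_mul] at this
      rw [Finset.prod_range_succ, ← ih, qFact_succ]
      push_cast at this ⊢
      linear_combination -(qFact (p ^ 2) n : ℂ) * this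
  rw [← hc, hG, coeff_mul, Finset.mul_sum]
  refine Finset.sum_congr rfl fun ij _ => ?_
  simp only [qExpSeriesInv, qExpSeries, coeff_mk, one_pow]
  ring

open PowerSeries in
/-- Rogers' expansion of the `q`-Hermite polynomials. -/
lemma qHermite_eval {q : ℝ} (hq0 : 0 < q) (hq1 : q < 1) {x : ℝ} {z w : ℂ} (hzw : z * w = 1)
    (hx : z + w = 2 * x) (n : ℕ) :
    (((qHermite q n).eval x : ℝ) : ℂ) = ∑ ij ∈ Finset.HasAntidiagonal.antidiagonal n,
      (qFact q n : ℂ) / (qFact q ij.1 * qFact q ij.2) * (z ^ ij.1 * w ^ ij.2) := by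
  set G := qExpSeries q z * qExpSeries q w with hG
  have key : rescale (q : ℂ) G = G - C (2 * x : ℂ) * (X * G) + X * (X * G) := by
    have h1 : (C z : PowerSeries ℂ) * C w = 1 := by rw [← map_mul, hzw, map_one]
    rw [hG, map_mul, rescale_qExpSeries hq0 hq1, rescale_qExpSeries hq0 hq1, ← hx, map_add]
    linear_combination (X ^ 2 * qExpSeries q z * qExpSeries q w) * h1
  have hc : ∀ n, (((qHermite q n).eval x : ℝ) : ℂ) = (qFact q n : ℂ) * coeff n G ∧
      (((qHermite q (n + 1)).eval x : ℝ) : ℂ) = (qFact q (n + 1) : ℂ) * coeff (n + 1) G := by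
    intro n
    induction n with
    | zero =>
      have h0 : coeff 0 G = 1 := by simp [hG, qExpSeries, qFact]
      have coeff_one_X_mul (φ : PowerSeries ℂ) : coeff 1 (X * φ) = coeff 0 φ :=
        coeff_succ_X_mul 0 φ
      have := congrArg (coeff 1) key
      simp only [map_add, map_sub, coeff_C_mul, coeff_rescale,
        coeff_one_X_mul, coeff_zero_X_mul] at this
      constructor
      · rw [h0]; simp [qHermite, qFact]
      · rw [h0] at this
        simp only [qHermite, qFact]
        simp at this ⊢
        linear_combination this
    | succ n ih =>
      refine ⟨ih.2, ?_⟩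
      have := congrArg (coeff (n + 2)) key
      simp only [map_add, map_sub, coeff_C_mul, coeff_rescale, coeff_succ_X_mul] at this
      simp only [qHermite, Polynomial.eval_sub, Polynomial.eval_mul, Polynomial.eval_C,
        Polynomial.eval_X, Complex.ofReal_sub, Complex.ofReal_mul]
      rw [ih.1, ih.2, qFact_succ q (n + 1), qFact_succ]
      push_cast at this ⊢
      linear_combination (qFact q n : ℂ) * (1 - (q : ℂ) ^ (n + 1)) * this
  rw [(hc n).1, hG, coeff_mul, Finset.mul_sum]
  refine Finset.sum_congr rfl fun ij _ => ?_
  simp only [qExpSeries, coeff_mk]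
  ring

lemma qPochInfA_multipliable {q : ℝ} (hq0 : 0 < q) (hq1 : q < 1) (a : ℝ) :
    Multipliable fun k : ℕ => 1 - a * q ^ k := by
  simpa [sub_eq_add_neg] using Real.multipliable_one_add_of_summable
    ((summable_geometric_of_lt_one hq0.le hq1).mul_left a).neg

lemma tendsto_qFact {q : ℝ} (hq0 : 0 < q) (hq1 : q < 1) :
    Filter.Tendsto (qFact q) Filter.atTop (nhds (qPochInfA q q)) := by
  refine (qPochInfA_multipliable hq0 hq1 q).tendsto_prod_tprod_nat.congr fun n => ?_
  exact Finset.prod_congr rfl fun i _ => by rw [pow_succ']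

lemma qFact_antitone {q : ℝ} (hq0 : 0 < q) (hq1 : q < 1) : Antitone (qFact q) :=
  antitone_nat_of_succ_le fun n => by
    rw [qFact_succ]
    exact mul_le_of_le_one_right (qFact_pos hq0 hq1 n).le (sub_le_self _ (by positivity))

lemma qPochInfA_le_qFact {q : ℝ} (hq0 : 0 < q) (hq1 : q < 1) (n : ℕ) :
    qPochInfA q q ≤ qFact q n :=
  (qFact_antitone hq0 hq1).le_of_tendsto (tendsto_qFact hq0 hq1) n

lemma qPochInfA_pos {q : ℝ} (hq0 : 0 < q) (hq1 : q < 1) : 0 < qPochInfA q q := by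
  refine lt_of_le_of_ne
    (ge_of_tendsto' (tendsto_qFact hq0 hq1) fun n => (qFact_pos hq0 hq1 n).le) (Ne.symm ?_)
  have := tprod_one_add_ne_zero_of_summable (R := ℝ) (f := fun k : ℕ => -(q * q ^ k))
    (fun k => by
      have : q ^ (k + 1) < 1 := pow_lt_one₀ hq0.le hq1 (Nat.succ_ne_zero k)
      rw [pow_succ'] at this
      linarith)
    (by simpa using (((summable_geometric_of_lt_one hq0.le hq1).mul_left q).abs))
  simpa [qPochInfA, sub_eq_add_neg] using this

lemma qFact_mul_qPochInfA {q : ℝ} (hq0 : 0 < q) (hq1 : q < 1) (n : ℕ) :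
    qFact q n * qPochInfA (q ^ (n + 1)) q = qPochInfA q q := by
  have h := Multipliable.prod_mul_tprod_nat_mul' (f := fun k : ℕ => 1 - q * q ^ k) (k := n)
    ((qPochInfA_multipliable hq0 hq1 (q ^ (n + 1))).congr fun k => by ring)
  rw [qPochInfA, qPochInfA, ← h, qFact]
  congr 1
  · exact Finset.prod_congr rfl fun i _ => by rw [pow_succ']
  · exact tprod_congr fun k => by ring

/-- The partial products of the `q`-Hermite weight. -/
noncomputable def qWeightProd (q : ℝ) (N : ℕ) (x : ℝ) : ℝ :=
  ∏ j ∈ Finset.range N, (1 - 2 * (2 * x ^ 2 - 1) * q ^ (j + 1) + q ^ (2 * (j + 1)))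

/-- The infinite product in the `q`-Hermite weight. -/
noncomputable def qWeightProdInf (q x : ℝ) : ℝ :=
  ∏' j : ℕ, (1 - 2 * (2 * x ^ 2 - 1) * q ^ (j + 1) + q ^ (2 * (j + 1)))

lemma tendsto_qWeightProd {q : ℝ} (hq0 : 0 < q) (hq1 : q < 1) (x : ℝ) :
    Filter.Tendsto (fun N => qWeightProd q N x) Filter.atTop (nhds (qWeightProdInf q x)) := by
  have h1 : Summable fun j : ℕ => q ^ (j + 1) :=
    (summable_nat_add_iff 1).2 (summable_geometric_of_lt_one hq0.le hq1)
  have h2 : Summable fun j : ℕ => q ^ (2 * (j + 1)) := by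
    simp_rw [pow_mul]
    exact (summable_nat_add_iff 1).2
      (summable_geometric_of_lt_one (by positivity) (pow_lt_one₀ hq0.le hq1 two_ne_zero))
  refine Multipliable.tendsto_prod_tprod_nat ?_
  refine (Real.multipliable_one_add_of_summable
    ((h1.mul_left (-(2 * (2 * x ^ 2 - 1)))).add h2)).congr fun j => ?_
  ring

lemma qWeightProd_nonneg {q : ℝ} (N : ℕ) {x : ℝ} (hx : |x| ≤ 1) :
    0 ≤ qWeightProd q N x := by
  have hx2 : x ^ 2 ≤ 1 := (sq_le_one_iff_abs_le_one x).2 hx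
  refine Finset.prod_nonneg fun j _ => ?_
  rw [pow_mul']
  nlinarith [sq_nonneg (q ^ (j + 1) - (2 * x ^ 2 - 1)), sq_nonneg x]

lemma exists_qWeightProd_le {q : ℝ} (hq0 : 0 < q) (hq1 : q < 1) :
    ∃ B, 0 ≤ B ∧ ∀ N x, |x| ≤ 1 → qWeightProd q N x ≤ B := by
  refine ⟨Real.exp (2 * ∑' j : ℕ, q ^ (j + 1)), (Real.exp_pos _).le, fun N x hx => ?_⟩
  have hx2 : x ^ 2 ≤ 1 := (sq_le_one_iff_abs_le_one x).2 hx
  have h1 : Summable fun j : ℕ => q ^ (j + 1) :=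
    (summable_nat_add_iff 1).2 (summable_geometric_of_lt_one hq0.le hq1)
  calc qWeightProd q N x ≤ ∏ j ∈ Finset.range N, Real.exp (2 * q ^ (j + 1)) := by
        refine Finset.prod_le_prod (fun j _ => ?_) fun j _ => ?_
        · rw [pow_mul']
          nlinarith [sq_nonneg (q ^ (j + 1) - (2 * x ^ 2 - 1)), sq_nonneg x]
        · have hp : 0 < q ^ (j + 1) := by positivity
          have := Real.add_one_le_exp (q ^ (j + 1))
          rw [pow_mul', two_mul (q ^ (j + 1)), Real.exp_add]
          nlinarith [mul_nonneg hp.le (sq_nonneg x)]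
    _ = Real.exp (2 * ∑ j ∈ Finset.range N, q ^ (j + 1)) := by
        rw [← Real.exp_sum, Finset.mul_sum]
    _ ≤ _ := by
        gcongr
        exact h1.sum_le_tsum _ fun j _ => by positivity

/-- The coefficients `(-1)^l q^{l(l-1)/2}` of the Jacobi triple product, with `q = p²`. -/
noncomputable def qTheta (p : ℝ) (l : ℤ) : ℂ := (-1) ^ l * (p : ℂ) ^ (l * (l - 1))

lemma qTheta_one_sub (p : ℝ) (l : ℤ) : qTheta p (1 - l) = -qTheta p l := by
  have : ((-1 : ℂ) ^ (1 - l)) = -(-1) ^ l := by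
    rw [zpow_sub₀ (by norm_num), zpow_one]
    rcases Int.even_or_odd l with h | h
    · rw [h.neg_one_zpow]; norm_num
    · rw [h.neg_one_zpow]; norm_num
  rw [qTheta, qTheta, this, show (1 - l) * (1 - l - 1) = l * (l - 1) by ring, neg_mul]

/-- The finite `q`-binomial theorem centred at index `m`. -/
lemma qBinomial_shift {p : ℝ} (hp0 : 0 < p) (hp1 : p < 1) {u : ℂ} (hu : u ≠ 0) (n m : ℕ) :
    ∑ ij ∈ Finset.HasAntidiagonal.antidiagonal n,
      (qFact (p ^ 2) n : ℂ) / (qFact (p ^ 2) ij.1 * qFact (p ^ 2) ij.2)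
        * (qTheta p (ij.1 - m) * u ^ ((ij.1 : ℤ) - m))
      = (-u) ^ (-m : ℤ) * (p : ℂ) ^ ((m : ℤ) * (m + 1)) *
        ∏ i ∈ Finset.range n, (1 - u * (p : ℂ) ^ (2 * ((i : ℤ) - m))) := by
  have hp : (p : ℂ) ≠ 0 := mod_cast hp0.ne'
  have hs : ∀ i : ℕ, 1 - u * (p : ℂ) ^ (2 * ((i : ℤ) - m))
      = 1 - (u * (p : ℂ) ^ (-2 * m : ℤ)) * ((p : ℂ) ^ 2) ^ i := by
    intro i
    rw [← pow_mul, ← zpow_natCast (p : ℂ) (2 * i), mul_assoc, ← zpow_add₀ hp]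
    congr 3
    push_cast
    ring
  simp_rw [hs]
  rw [← qBinomial hp0 hp1, Finset.mul_sum]
  refine Finset.sum_congr rfl fun ij _ => ?_
  have e1 : (-(u * (p : ℂ) ^ (-2 * m : ℤ))) ^ ij.1
      = (-u) ^ (ij.1 : ℤ) * (p : ℂ) ^ (-2 * m * ij.1 : ℤ) := by
    rw [← neg_mul, mul_pow, zpow_mul (p : ℂ) (-2 * m), zpow_natCast, zpow_natCast]
  have e2 : (-u) ^ ((ij.1 : ℤ) - m) = (-1) ^ ((ij.1 : ℤ) - m) * u ^ ((ij.1 : ℤ) - m) := by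
    rw [← mul_zpow, neg_one_mul]
  have e3 : (p : ℂ) ^ (((ij.1 : ℤ) - m) * (ij.1 - m - 1)) = (p : ℂ) ^ ((m : ℤ) * (m + 1)) *
      ((p : ℂ) ^ (-2 * m * ij.1 : ℤ) * (p : ℂ) ^ ((ij.1 : ℤ) * (ij.1 - 1))) := by
    rw [← zpow_add₀ hp, ← zpow_add₀ hp]
    congr 1
    ring
  have e4 : (-u) ^ ((ij.1 : ℤ) - m) = (-u) ^ (-m : ℤ) * (-u) ^ (ij.1 : ℤ) := by
    rw [← zpow_add₀ (neg_ne_zero.2 hu)]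
    congr 1
    ring
  rw [qTheta, e1, e3, mul_right_comm ((-1 : ℂ) ^ _), ← e2, e4]
  ring

/-- The finite form of the Jacobi triple product identity. -/
lemma finite_triple_product {p : ℝ} (hp0 : 0 < p) (hp1 : p < 1) {u : ℂ} (hu : u ≠ 0) (N : ℕ) :
    (1 - u) * ∏ j ∈ Finset.range N,
        ((1 - u * ((p : ℂ) ^ 2) ^ (j + 1)) * (1 - u⁻¹ * ((p : ℂ) ^ 2) ^ (j + 1)))
      = ∑ ij ∈ Finset.HasAntidiagonal.antidiagonal (2 * N + 1),
        (qFact (p ^ 2) (2 * N + 1) : ℂ) / (qFact (p ^ 2) ij.1 * qFact (p ^ 2) ij.2)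
        * (qTheta p (ij.1 - N) * u ^ ((ij.1 : ℤ) - N)) := by
  have hp : (p : ℂ) ≠ 0 := mod_cast hp0.ne'
  rw [qBinomial_shift hp0 hp1 hu, show 2 * N + 1 = N + (N + 1) by ring, Finset.prod_range_add,
    Finset.prod_range_succ', Finset.prod_mul_distrib]
  have h1 : ∏ j ∈ Finset.range N, (1 - u⁻¹ * ((p : ℂ) ^ 2) ^ (j + 1))
      = (-u) ^ (-N : ℤ) * (p : ℂ) ^ ((N : ℤ) * (N + 1)) *
        ∏ i ∈ Finset.range N, (1 - u * (p : ℂ) ^ (2 * ((i : ℤ) - N))) := by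
    rw [← Finset.prod_range_reflect (fun i => 1 - u * (p : ℂ) ^ (2 * ((i : ℤ) - N)))]
    have h2 : ∏ j ∈ Finset.range N, (1 - u * (p : ℂ) ^ (2 * (((N - 1 - j : ℕ) : ℤ) - N)))
        = ∏ j ∈ Finset.range N, (1 - u * (p : ℂ) ^ (-2 * ((j : ℤ) + 1))) := by
      refine Finset.prod_congr rfl fun j hj => ?_
      have : ((N - 1 - j : ℕ) : ℤ) = N - 1 - j := by
        have := Finset.mem_range.1 hj
        omega
      rw [this]
      congr 3
      ring
    rw [h2]
    clear h2
    induction N with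
    | zero => simp
    | succ n ih =>
      rw [Finset.prod_range_succ, Finset.prod_range_succ, ih]
      have e1 : (-u) ^ (-((n + 1 : ℕ) : ℤ)) = (-u) ^ (-n : ℤ) * (-u)⁻¹ := by
        rw [← zpow_sub_one₀ (neg_ne_zero.2 hu)]
        congr 1
        push_cast
        ring
      have e2 : (p : ℂ) ^ (((n + 1 : ℕ) : ℤ) * ((n + 1 : ℕ) + 1))
          = (p : ℂ) ^ ((n : ℤ) * (n + 1)) * ((p : ℂ) ^ 2) ^ (n + 1) := by
        rw [← pow_mul, ← zpow_natCast (p : ℂ) (2 * (n + 1)), ← zpow_add₀ hp]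
        congr 1
        push_cast
        ring
      have e3 : (p : ℂ) ^ (-2 * ((n : ℤ) + 1)) = (((p : ℂ) ^ 2) ^ (n + 1))⁻¹ := by
        rw [← pow_mul, ← zpow_natCast (p : ℂ) (2 * (n + 1)), ← zpow_neg]
        congr 1
      rw [e1, e2, e3]
      field_simp
      ring
  have h3 : ∏ j ∈ Finset.range N, (1 - u * (p : ℂ) ^ (2 * (((N + (j + 1) : ℕ) : ℤ) - N)))
      = ∏ j ∈ Finset.range N, (1 - u * ((p : ℂ) ^ 2) ^ (j + 1)) := by
    refine Finset.prod_congr rfl fun j _ => ?_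
    rw [← pow_mul, ← zpow_natCast (p : ℂ) (2 * (j + 1))]
    congr 3
    push_cast
    ring
  rw [h1, h3]
  simp
  ring

lemma integral_exp_two_mul_zpow (l : ℤ) :
    ∫ θ in (0 : ℝ)..π, (Complex.exp (2 * θ * Complex.I)) ^ l = if l = 0 then (π : ℂ) else 0 := by
  split_ifs with h
  · simp [h]
  · have hc : (2 * l * Complex.I : ℂ) ≠ 0 := by
      simp [h, Complex.I_ne_zero]
    have : ∀ θ : ℝ, (Complex.exp (2 * θ * Complex.I)) ^ l
        = Complex.exp ((2 * l * Complex.I : ℂ) * θ) := by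
      intro θ
      rw [← Complex.exp_int_mul]
      ring_nf
    simp_rw [this]
    rw [integral_exp_mul_complex hc]
    have h2 : Complex.exp ((2 * l * Complex.I : ℂ) * π) = 1 := by
      rw [Complex.exp_eq_one_iff]
      exact ⟨l, by ring⟩
    simp [h2]

lemma continuous_exp_two_mul_zpow (l : ℤ) :
    Continuous fun θ : ℝ => (Complex.exp (2 * θ * Complex.I)) ^ l := by
  refine Continuous.zpow₀ (by fun_prop) l fun θ => Or.inl (Complex.exp_ne_zero _)

/-- The moments of the theta part of the finite weight converge. -/
lemma tendsto_theta_moment {p : ℝ} (hp0 : 0 < p) (hp1 : p < 1) (l : ℤ) :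
    Filter.Tendsto (fun N : ℕ => ∫ θ in (0 : ℝ)..π, (Complex.exp (2 * θ * Complex.I)) ^ l *
      ∑ ij ∈ Finset.HasAntidiagonal.antidiagonal (2 * N + 1),
        (qFact (p ^ 2) (2 * N + 1) : ℂ) / (qFact (p ^ 2) ij.1 * qFact (p ^ 2) ij.2)
        * (qTheta p (ij.1 - N) * (Complex.exp (2 * θ * Complex.I)) ^ ((ij.1 : ℤ) - N)))
      Filter.atTop (nhds (π / (qPochInfA (p ^ 2) (p ^ 2) : ℝ) * qTheta p (-l))) := by
  have hq0 : 0 < p ^ 2 := by positivity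
  have hq1 : p ^ 2 < 1 := by nlinarith
  have hQ : ((qPochInfA (p ^ 2) (p ^ 2) : ℝ) : ℂ) ≠ 0 := mod_cast (qPochInfA_pos hq0 hq1).ne'
  have hlim : Filter.Tendsto (fun n => (qFact (p ^ 2) n : ℂ)) Filter.atTop
      (nhds ((qPochInfA (p ^ 2) (p ^ 2) : ℝ) : ℂ)) :=
    (Complex.continuous_ofReal.tendsto _).comp (tendsto_qFact hq0 hq1)
  have t0 : Filter.Tendsto (fun N : ℕ => 2 * N + 1) Filter.atTop Filter.atTop :=
    Filter.tendsto_atTop_mono (fun N => by rw [id]; omega) Filter.tendsto_id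
  have t1 : Filter.Tendsto (fun N : ℕ => ((N : ℤ) - l).toNat) Filter.atTop Filter.atTop :=
    Filter.tendsto_atTop.2 fun b => by
      filter_upwards [Filter.eventually_ge_atTop (b + l.natAbs)] with N hN
      omega
  have t2 : Filter.Tendsto (fun N : ℕ => ((N : ℤ) + 1 + l).toNat) Filter.atTop Filter.atTop :=
    Filter.tendsto_atTop.2 fun b => by
      filter_upwards [Filter.eventually_ge_atTop (b + l.natAbs)] with N hN
      omega
  have hfin : ∀ᶠ N : ℕ in Filter.atTop,
      (qFact (p ^ 2) (2 * N + 1) : ℂ) / (qFact (p ^ 2) ((N : ℤ) - l).toNat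
        * qFact (p ^ 2) ((N : ℤ) + 1 + l).toNat) * (π * qTheta p (-l))
      = ∫ θ in (0 : ℝ)..π, (Complex.exp (2 * θ * Complex.I)) ^ l *
      ∑ ij ∈ Finset.HasAntidiagonal.antidiagonal (2 * N + 1),
        (qFact (p ^ 2) (2 * N + 1) : ℂ) / (qFact (p ^ 2) ij.1 * qFact (p ^ 2) ij.2)
        * (qTheta p (ij.1 - N) * (Complex.exp (2 * θ * Complex.I)) ^ ((ij.1 : ℤ) - N)) := by
    filter_upwards [Filter.eventually_ge_atTop (1 + l.natAbs)] with N hN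
    have e : ∀ θ : ℝ, (Complex.exp (2 * θ * Complex.I)) ^ l *
      ∑ ij ∈ Finset.HasAntidiagonal.antidiagonal (2 * N + 1),
        (qFact (p ^ 2) (2 * N + 1) : ℂ) / (qFact (p ^ 2) ij.1 * qFact (p ^ 2) ij.2)
        * (qTheta p (ij.1 - N) * (Complex.exp (2 * θ * Complex.I)) ^ ((ij.1 : ℤ) - N))
      = ∑ ij ∈ Finset.HasAntidiagonal.antidiagonal (2 * N + 1),
        ((qFact (p ^ 2) (2 * N + 1) : ℂ) / (qFact (p ^ 2) ij.1 * qFact (p ^ 2) ij.2)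
        * qTheta p (ij.1 - N)) * (Complex.exp (2 * θ * Complex.I)) ^ ((ij.1 : ℤ) - N + l) := by
      intro θ
      rw [Finset.mul_sum]
      refine Finset.sum_congr rfl fun ij _ => ?_
      rw [zpow_add₀ (Complex.exp_ne_zero _)]
      ring
    simp_rw [e]
    rw [intervalIntegral.integral_finsetSum fun ij _ =>
      ((continuous_exp_two_mul_zpow _).const_mul _).intervalIntegrable _ _]
    simp_rw [intervalIntegral.integral_const_mul, integral_exp_two_mul_zpow]
    rw [Finset.sum_eq_single_of_mem (((N : ℤ) - l).toNat, ((N : ℤ) + 1 + l).toNat)]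
    · have h1 : ((((N : ℤ) - l).toNat : ℕ) : ℤ) = N - l := Int.toNat_of_nonneg (by omega)
      simp only [h1]
      rw [if_pos (by ring), show (N : ℤ) - l - N = -l by ring]
      ring
    · simp only [Finset.HasAntidiagonal.mem_antidiagonal]
      omega
    · intro ij hij hne
      rw [if_neg, mul_zero]
      intro h
      apply hne
      have := Finset.HasAntidiagonal.mem_antidiagonal.1 hij
      ext
      · simp only; omega
      · simp only; omega
  refine Filter.Tendsto.congr' hfin ?_
  have e : (π : ℂ) / (qPochInfA (p ^ 2) (p ^ 2) : ℝ) * qTheta p (-l)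
      = (qPochInfA (p ^ 2) (p ^ 2) : ℝ) / ((qPochInfA (p ^ 2) (p ^ 2) : ℝ) *
        (qPochInfA (p ^ 2) (p ^ 2) : ℝ)) * (π * qTheta p (-l)) := by
    field_simp
  rw [e]
  exact ((hlim.comp t0).div ((hlim.comp t1).mul (hlim.comp t2)) (mul_ne_zero hQ hQ)).mul_const _

lemma qWeightProd_eq_theta {p : ℝ} (hp0 : 0 < p) (hp1 : p < 1) (θ : ℝ) (N : ℕ) :
    ((4 * (1 - Real.cos θ ^ 2) * qWeightProd (p ^ 2) N (Real.cos θ) : ℝ) : ℂ)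
      = (1 - (Complex.exp (2 * θ * Complex.I))⁻¹) *
      ∑ ij ∈ Finset.HasAntidiagonal.antidiagonal (2 * N + 1),
        (qFact (p ^ 2) (2 * N + 1) : ℂ) / (qFact (p ^ 2) ij.1 * qFact (p ^ 2) ij.2)
        * (qTheta p (ij.1 - N) * (Complex.exp (2 * θ * Complex.I)) ^ ((ij.1 : ℤ) - N)) := by
  set u := Complex.exp (2 * θ * Complex.I) with hu
  have hu0 : u ≠ 0 := Complex.exp_ne_zero _
  have hinv : u * u⁻¹ = 1 := mul_inv_cancel₀ hu0
  have hsum : u + u⁻¹ = 2 * (2 * Complex.cos θ ^ 2 - 1) := by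
    rw [hu, ← Complex.exp_neg, ← Complex.cos_two_mul, Complex.two_cos]
    ring_nf
  rw [← finite_triple_product hp0 hp1 hu0, qWeightProd]
  push_cast
  rw [← mul_assoc]
  congr 1
  · linear_combination -hinv + hsum
  · refine Finset.prod_congr rfl fun j _ => ?_
    rw [mul_comm 2 (j + 1), pow_mul _ (j + 1) 2]
    linear_combination ((p : ℂ) ^ 2) ^ (j + 1) * hsum - (((p : ℂ) ^ 2) ^ (j + 1)) ^ 2 * hinv

lemma continuous_qWeightProd (q : ℝ) (N : ℕ) : Continuous (qWeightProd q N) := by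
  unfold qWeightProd
  fun_prop

/-- Passage from the finite weights to the `q`-Hermite weight under the integral. -/
lemma tendsto_integral_qWeightProd {q : ℝ} (hq0 : 0 < q) (hq1 : q < 1) {g : ℝ → ℂ}
    (hg : Continuous g) :
    Filter.Tendsto (fun N => ∫ θ in (0 : ℝ)..π,
        g θ * ((4 * (1 - Real.cos θ ^ 2) * qWeightProd q N (Real.cos θ) : ℝ) : ℂ)) Filter.atTop
      (nhds (∫ θ in (0 : ℝ)..π,
        g θ * ((4 * (1 - Real.cos θ ^ 2) * qWeightProdInf q (Real.cos θ) : ℝ) : ℂ))) := by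
  obtain ⟨B, hB0, hB⟩ := exists_qWeightProd_le hq0 hq1
  refine intervalIntegral.tendsto_integral_filter_of_dominated_convergence
    (fun θ => ‖g θ‖ * (4 * B)) (.of_forall fun N => ?_) (.of_forall fun N => ?_) ?_ ?_
  · have := continuous_qWeightProd q N
    exact Continuous.aestronglyMeasurable (by fun_prop)
  · refine .of_forall fun θ _ => ?_
    have hc := Real.abs_cos_le_one θ
    have hc2 := (sq_le_one_iff_abs_le_one _).2 hc
    have h0 := qWeightProd_nonneg (q := q) N hc
    rw [norm_mul, Complex.norm_real, Real.norm_of_nonneg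
      (mul_nonneg (by linarith) h0)]
    gcongr
    · nlinarith [sq_nonneg (Real.cos θ)]
    · exact hB N _ hc
  · exact (by fun_prop : Continuous fun θ => ‖g θ‖ * (4 * B)).intervalIntegrable _ _
  · refine .of_forall fun θ _ => ?_
    refine Filter.Tendsto.const_mul _ ?_
    exact (Complex.continuous_ofReal.tendsto _).comp ((tendsto_qWeightProd hq0 hq1 _).const_mul _)

lemma tendsto_weight_moment {p : ℝ} (hp0 : 0 < p) (hp1 : p < 1) (l : ℤ) :
    Filter.Tendsto (fun N => ∫ θ in (0 : ℝ)..π, (Complex.exp (2 * θ * Complex.I)) ^ l *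
        ((4 * (1 - Real.cos θ ^ 2) * qWeightProd (p ^ 2) N (Real.cos θ) : ℝ) : ℂ)) Filter.atTop
      (nhds (π / (qPochInfA (p ^ 2) (p ^ 2) : ℝ) * (qTheta p (-l) + qTheta p l))) := by
  have h := (tendsto_theta_moment hp0 hp1 l).sub (tendsto_theta_moment hp0 hp1 (l - 1))
  rw [neg_sub, qTheta_one_sub, ← mul_sub, sub_neg_eq_add] at h
  refine h.congr fun N => ?_
  have hcont := continuous_exp_two_mul_zpow
  rw [← intervalIntegral.integral_sub]
  · refine intervalIntegral.integral_congr fun θ _ => ?_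
    rw [qWeightProd_eq_theta hp0 hp1, zpow_sub_one₀ (Complex.exp_ne_zero _)]
    ring
  all_goals exact Continuous.intervalIntegrable (by fun_prop) _ _

lemma integral_mul_qWeight (q : ℝ) (g : ℝ → ℝ) :
    ∫ x in (-1 : ℝ)..1, g x * qWeight q x = ∫ θ in (0 : ℝ)..π,
      g (Real.cos θ) * (4 * (1 - Real.cos θ ^ 2) * qWeightProdInf q (Real.cos θ)) := by
  rw [← Polynomial.Chebyshev.integral_measureT_eq_integral_cos
    (f := fun x => g x * (4 * (1 - x ^ 2) * qWeightProdInf q x)),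
    Polynomial.Chebyshev.integral_measureT]
  refine intervalIntegral.integral_congr fun x hx => ?_
  rw [Set.uIcc_of_le (by norm_num)] at hx
  have h0 : 0 ≤ 1 - x ^ 2 := by nlinarith [hx.1, hx.2]
  simp only [qWeight, qWeightProdInf, Real.sqrt_inv]
  have : (1 - x ^ 2) * (√(1 - x ^ 2))⁻¹ = √(1 - x ^ 2) := by
    rw [← div_eq_mul_inv, Real.div_sqrt]
  linear_combination -(4 * g x *
    ∏' j : ℕ, (1 - 2 * (2 * x ^ 2 - 1) * q ^ (j + 1) + q ^ (2 * (j + 1)))) * this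

lemma integral_even_qHermite_mul_qWeight {p : ℝ} (hp0 : 0 < p) (hp1 : p < 1) (m : ℕ) :
    ∫ x in (-1 : ℝ)..1, (qHermite (p ^ 2) (2 * m)).eval x * qWeight (p ^ 2) x
      = if m = 0 then 2 * π / qPochInfA (p ^ 2) (p ^ 2) else 0 := by
  have hq0 : 0 < p ^ 2 := by positivity
  have hq1 : p ^ 2 < 1 := by nlinarith
  have hp : (p : ℂ) ≠ 0 := mod_cast hp0.ne'
  have hlim := tendsto_integral_qWeightProd hq0 hq1
    (g := fun θ => (((qHermite (p ^ 2) (2 * m)).eval (Real.cos θ) : ℝ) : ℂ)) (by fun_prop)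
  set c : ℕ × ℕ → ℂ := fun ij =>
    (qFact (p ^ 2) (2 * m) : ℂ) / (qFact (p ^ 2) ij.1 * qFact (p ^ 2) ij.2) with hc
  have hexp : ∀ θ : ℝ, (((qHermite (p ^ 2) (2 * m)).eval (Real.cos θ) : ℝ) : ℂ)
      = ∑ ij ∈ Finset.HasAntidiagonal.antidiagonal (2 * m),
        c ij * (Complex.exp (2 * θ * Complex.I)) ^ ((ij.1 : ℤ) - m) := by
    intro θ
    have hz0 := Complex.exp_ne_zero (θ * Complex.I)
    rw [qHermite_eval hq0 hq1 (mul_inv_cancel₀ hz0)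
      (by rw [← Complex.exp_neg, Complex.ofReal_cos, Complex.two_cos]; ring_nf)]
    refine Finset.sum_congr rfl fun ij hij => ?_
    have hij' := Finset.HasAntidiagonal.mem_antidiagonal.1 hij
    rw [hc]
    congr 1
    rw [show (2 * θ * Complex.I : ℂ) = θ * Complex.I + θ * Complex.I by ring, Complex.exp_add,
      ← pow_two, ← zpow_natCast _ 2, ← zpow_mul, inv_pow, ← zpow_natCast, ← zpow_natCast,
      ← zpow_neg, ← zpow_add₀ hz0]
    congr 1
    push_cast
    omega
  have hlim2 : Filter.Tendsto (fun N => ∫ θ in (0 : ℝ)..π,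
      (((qHermite (p ^ 2) (2 * m)).eval (Real.cos θ) : ℝ) : ℂ) *
        ((4 * (1 - Real.cos θ ^ 2) * qWeightProd (p ^ 2) N (Real.cos θ) : ℝ) : ℂ)) Filter.atTop
      (nhds (∑ ij ∈ Finset.HasAntidiagonal.antidiagonal (2 * m),
        c ij * (π / (qPochInfA (p ^ 2) (p ^ 2) : ℝ) *
          (qTheta p (-(ij.1 - m)) + qTheta p (ij.1 - m))))) := by
    refine (tendsto_finsetSum _ fun ij _ =>
      (tendsto_weight_moment hp0 hp1 _).const_mul (c ij)).congr fun N => ?_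
    have hcont := continuous_exp_two_mul_zpow
    have hcont2 := continuous_qWeightProd (p ^ 2) N
    simp_rw [hexp, Finset.sum_mul]
    rw [intervalIntegral.integral_finsetSum fun ij _ =>
      Continuous.intervalIntegrable (by fun_prop) _ _]
    simp_rw [mul_assoc, intervalIntegral.integral_const_mul]
  have hval := tendsto_nhds_unique hlim hlim2
  have hthe := qBinomial_shift hp0 hp1 one_ne_zero (2 * m) m
  simp only [one_zpow, mul_one] at hthe
  have hthe2 : ∑ ij ∈ Finset.HasAntidiagonal.antidiagonal (2 * m), c ij * qTheta p (-(ij.1 - m))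
      = ∑ ij ∈ Finset.HasAntidiagonal.antidiagonal (2 * m), c ij * qTheta p (ij.1 - m) := by
    rw [← Finset.Nat.sum_antidiagonal_swap]
    refine Finset.sum_congr rfl fun ij hij => ?_
    have hij' := Finset.HasAntidiagonal.mem_antidiagonal.1 hij
    simp only [hc, Prod.fst_swap, Prod.snd_swap]
    rw [mul_comm (qFact (p ^ 2) ij.2 : ℂ), show -((ij.2 : ℤ) - m) = ij.1 - m by omega]
  rw [integral_mul_qWeight]
  apply Complex.ofReal_injective
  rw [← intervalIntegral.integral_ofReal]
  simp only [Complex.ofReal_mul (Polynomial.eval _ _)]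
  rw [hval]
  simp_rw [mul_add, mul_left_comm (c _)]
  rw [Finset.sum_add_distrib, ← Finset.mul_sum, ← Finset.mul_sum, hthe2, hthe]
  split_ifs with hm
  · subst hm
    simp
    ring
  · rw [Finset.prod_eq_zero (Finset.mem_range.2 (show m < 2 * m by omega)) (by simp)]
    simp

lemma intervalIntegrable_of_measurable_of_bound {E : Type*} [NormedAddCommGroup E]
    [MeasurableSpace E] [BorelSpace E] [SecondCountableTopology E] {f : ℝ → E}
    (hf : Measurable f) {M : ℝ} (hM : ∀ x, |x| ≤ 1 → ‖f x‖ ≤ M) :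
    IntervalIntegrable f MeasureTheory.volume (-1) 1 := by
  refine (intervalIntegrable_const (c := M)).mono_fun hf.aestronglyMeasurable ?_
  rw [Set.uIoc_of_le (by norm_num)]
  refine (MeasureTheory.ae_restrict_iff' measurableSet_Ioc).2 (.of_forall fun x hx => ?_)
  exact (hM x (abs_le.2 ⟨hx.1.le, hx.2⟩)).trans (le_abs_self M)

lemma measurable_qWeight {q : ℝ} (hq0 : 0 < q) (hq1 : q < 1) : Measurable (qWeight q) := by
  have h : Measurable (qWeightProdInf q) :=
    measurable_of_tendsto_metrizable (fun N => (continuous_qWeightProd q N).measurable)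
      (tendsto_pi_nhds.2 fun x => tendsto_qWeightProd hq0 hq1 x)
  exact (by fun_prop : Measurable fun x => 4 * √(1 - x ^ 2) * qWeightProdInf q x)

lemma qWeight_eq_zero {q x : ℝ} (hx : 1 < |x|) : qWeight q x = 0 := by
  have : 1 < x ^ 2 := (one_lt_sq_iff_one_lt_abs x).2 hx
  rw [qWeight, Real.sqrt_eq_zero_of_nonpos (by linarith)]
  simp

lemma qWeight_nonneg {q : ℝ} (hq0 : 0 < q) (hq1 : q < 1) (x : ℝ) : 0 ≤ qWeight q x := by
  rcases le_or_gt |x| 1 with hx | hx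
  · exact mul_nonneg (by positivity)
      (ge_of_tendsto' (tendsto_qWeightProd hq0 hq1 x) fun N => qWeightProd_nonneg N hx)
  · exact (qWeight_eq_zero hx).ge

lemma exists_qWeight_le {q : ℝ} (hq0 : 0 < q) (hq1 : q < 1) :
    ∃ B, 0 ≤ B ∧ ∀ x, qWeight q x ≤ B := by
  obtain ⟨B, hB0, hB⟩ := exists_qWeightProd_le hq0 hq1
  refine ⟨4 * 1 * B, by positivity, fun x => ?_⟩
  rcases le_or_gt |x| 1 with hx | hx
  · refine mul_le_mul ?_ (le_of_tendsto' (tendsto_qWeightProd hq0 hq1 x) fun N => hB N x hx)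
      (ge_of_tendsto' (tendsto_qWeightProd hq0 hq1 x) fun N => qWeightProd_nonneg N hx)
      (by norm_num)
    gcongr
    exact Real.sqrt_le_iff.2 ⟨zero_le_one, by nlinarith [sq_nonneg x]⟩
  · rw [qWeight_eq_zero hx]
    positivity

lemma intervalIntegrable_eval_mul_qWeight {q : ℝ} (hq0 : 0 < q) (hq1 : q < 1)
    (f : Polynomial ℝ) :
    IntervalIntegrable (fun x => f.eval x * qWeight q x) MeasureTheory.volume (-1) 1 := by
  obtain ⟨B, -, hB⟩ := exists_qWeight_le hq0 hq1
  have h := intervalIntegrable_of_measurable_of_bound (measurable_qWeight hq0 hq1) (M := B)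
    fun x _ => by rw [Real.norm_of_nonneg (qWeight_nonneg hq0 hq1 x)]; exact hB x
  exact h.continuousOn_mul f.continuous.continuousOn

lemma two_X_mul_qHermite (q : ℝ) (n : ℕ) :
    Polynomial.C 2 * Polynomial.X * qHermite q n
      = qHermite q (n + 1) + Polynomial.C (1 - q ^ n) * qHermite q (n - 1) := by
  cases n with
  | zero => simp [qHermite]
  | succ n => simp only [qHermite, Nat.add_sub_cancel]; ring

lemma qHermite_eval_neg (q x : ℝ) (n : ℕ) :
    (qHermite q n).eval (-x) = (-1) ^ n * (qHermite q n).eval x := by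
  induction n using Nat.strong_induction_on with
  | _ n ih =>
    match n with
    | 0 => simp [qHermite]
    | 1 => simp [qHermite]
    | n + 2 =>
      have h1 := ih n (by omega)
      have h2 := ih (n + 1) (by omega)
      simp only [qHermite, Polynomial.eval_sub, Polynomial.eval_mul, Polynomial.eval_C,
        Polynomial.eval_X, h1, h2]
      ring

lemma integral_qHermite_mul_qWeight {q : ℝ} (hq0 : 0 < q) (hq1 : q < 1) (n : ℕ) :
    ∫ x in (-1 : ℝ)..1, (qHermite q n).eval x * qWeight q x
      = if n = 0 then 2 * π / qPochInfA q q else 0 := by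
  rcases Nat.even_or_odd' n with ⟨m, rfl | rfl⟩
  · have h := integral_even_qHermite_mul_qWeight (p := √q) (Real.sqrt_pos.2 hq0)
      (by rw [Real.sqrt_lt' one_pos]; simpa using hq1) m
    rw [Real.sq_sqrt hq0.le] at h
    rw [h]
    simp
  · rw [if_neg (by omega)]
    have h := intervalIntegral.integral_comp_neg (a := -1) (b := 1)
      (fun x => (qHermite q (2 * m + 1)).eval x * qWeight q x)
    have hw : ∀ x, qWeight q (-x) = qWeight q x := fun x => by simp [qWeight]
    have hs : (-1 : ℝ) ^ (2 * m + 1) = -1 := Odd.neg_one_pow ⟨m, rfl⟩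
    simp only [hw, qHermite_eval_neg, hs, neg_neg, neg_mul, one_mul,
      intervalIntegral.integral_neg] at h
    linarith

/-- Orthogonality of the continuous `q`-Hermite polynomials. -/
lemma integral_qHermite_mul_qHermite {q : ℝ} (hq0 : 0 < q) (hq1 : q < 1) (m n : ℕ) :
    ∫ x in (-1 : ℝ)..1, (qHermite q m * qHermite q n).eval x * qWeight q x
      = if m = n then qFact q n * (2 * π / qPochInfA q q) else 0 := by
  have hint := intervalIntegrable_eval_mul_qWeight hq0 hq1
  induction m using Nat.strong_induction_on generalizing n with
  | _ m ih =>
    cases m with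
    | zero =>
      rw [show qHermite q 0 = 1 by simp [qHermite], one_mul, integral_qHermite_mul_qWeight hq0 hq1]
      rcases n with _ | n
      · simp [qFact]
      · simp
    | succ m =>
      have e : qHermite q (m + 1) * qHermite q n = qHermite q m * qHermite q (n + 1)
          + Polynomial.C (1 - q ^ n) * (qHermite q m * qHermite q (n - 1))
          - Polynomial.C (1 - q ^ m) * (qHermite q (m - 1) * qHermite q n) := by
        linear_combination qHermite q m * two_X_mul_qHermite q n
          - qHermite q n * two_X_mul_qHermite q m
      have e2 : ∀ x, (qHermite q (m + 1) * qHermite q n).eval x * qWeight q x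
          = (qHermite q m * qHermite q (n + 1)).eval x * qWeight q x
          + (1 - q ^ n) * ((qHermite q m * qHermite q (n - 1)).eval x * qWeight q x)
          - (1 - q ^ m) * ((qHermite q (m - 1) * qHermite q n).eval x * qWeight q x) := by
        intro x
        rw [e]
        simp only [Polynomial.eval_sub, Polynomial.eval_add, Polynomial.eval_mul,
          Polynomial.eval_C]
        ring
      simp_rw [e2]
      rw [intervalIntegral.integral_sub ((hint _).add ((hint _).const_mul _))
        ((hint _).const_mul _), intervalIntegral.integral_add (hint _) ((hint _).const_mul _),
        intervalIntegral.integral_const_mul, intervalIntegral.integral_const_mul,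
        ih m (by omega), ih m (by omega), ih (m - 1) (by omega)]
      rcases n with _ | n
      · rcases m with _ | m
        · simp
        · rcases m with _ | m <;> simp [qFact]
      · rcases m with _ | m
        · rcases n with _ | n <;> simp [qFact]
        · simp only [Nat.add_sub_cancel, Nat.add_right_cancel_iff]
          by_cases h1 : m = n + 1
          · have h2 : m + 1 ≠ n := by omega
            subst h1
            simp only [h2, if_true, if_false, qFact_succ]
            ring
          · by_cases h2 : m + 1 = n
            · subst h2
              simp only [h1, if_true, if_false, qFact_succ]
              ring
            · simp [h1, h2]

lemma integral_qWave_mul_qWave {q : ℝ} (hq0 : 0 < q) (hq1 : q < 1) (m n : ℕ) :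
    ∫ x in (-1 : ℝ)..1, qWave q m x * qWave q n x = if m = n then √((1 - q) / 2) else 0 := by
  set κ : ℕ → ℝ := fun n =>
    ((1 - q) / 2) ^ ((1 : ℝ) / 4) * √(qPochInfA (q ^ (n + 1)) q / (2 * π)) with hκ
  have e : ∀ x, qWave q m x * qWave q n x
      = κ m * κ n * ((qHermite q m * qHermite q n).eval x * qWeight q x) := by
    intro x
    rw [qWave, qWave, Polynomial.eval_mul]
    linear_combination (κ m * κ n * (qHermite q m).eval x * (qHermite q n).eval x) *
      Real.mul_self_sqrt (qWeight_nonneg hq0 hq1 x)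
  simp_rw [e]
  rw [intervalIntegral.integral_const_mul, integral_qHermite_mul_qHermite hq0 hq1]
  split_ifs with h
  · subst h
    have hP := qFact_pos hq0 hq1 m
    have hQ := qPochInfA_pos hq0 hq1
    have hPQ := qFact_mul_qPochInfA hq0 hq1 m
    have hpos : 0 < qPochInfA (q ^ (m + 1)) q := pos_of_mul_pos_right (hPQ ▸ hQ) hP.le
    have h0 : 0 ≤ (1 - q) / 2 := by linarith
    have h1 : ((1 - q) / 2) ^ ((1 : ℝ) / 4) * ((1 - q) / 2) ^ ((1 : ℝ) / 4) = √((1 - q) / 2) := by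
      rw [Real.sqrt_eq_rpow, ← Real.rpow_add_of_nonneg h0 (by norm_num) (by norm_num)]
      norm_num
    have h2 : √(qPochInfA (q ^ (m + 1)) q / (2 * π)) * √(qPochInfA (q ^ (m + 1)) q / (2 * π))
        = qPochInfA (q ^ (m + 1)) q / (2 * π) := Real.mul_self_sqrt (by positivity)
    have h3 : κ m * κ m = √((1 - q) / 2) * (qPochInfA (q ^ (m + 1)) q / (2 * π)) := by
      rw [← h1, ← h2]
      ring
    rw [h3, ← hPQ]
    field_simp
  · simp

lemma measurable_qWave {q : ℝ} (hq0 : 0 < q) (hq1 : q < 1) (n : ℕ) : Measurable (qWave q n) := by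
  have := measurable_qWeight hq0 hq1
  have h2 : Measurable fun x => (qHermite q n).eval x := (qHermite q n).continuous.measurable
  unfold qWave
  fun_prop

lemma abs_qHermite_eval_le_s18 {q : ℝ} (hq0 : 0 < q) (hq1 : q < 1) (n : ℕ) {x : ℝ} (hx : |x| ≤ 1) :
    |(qHermite q n).eval x| ≤ (n + 1) / qPochInfA q q ^ 2 := by
  have hQ := qPochInfA_pos hq0 hq1
  obtain ⟨hx1, hx2⟩ := abs_le.1 hx
  have hz0 := Complex.exp_ne_zero (Real.arccos x * Complex.I)
  have hz1 := Complex.norm_exp_ofReal_mul_I (Real.arccos x)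
  have hsum : Complex.exp (Real.arccos x * Complex.I) + (Complex.exp (Real.arccos x * Complex.I))⁻¹
      = 2 * x := by
    rw [← Complex.exp_neg, ← neg_mul, ← Complex.two_cos, ← Complex.ofReal_cos,
      Real.cos_arccos hx1 hx2]
  rw [← Real.norm_eq_abs, ← Complex.norm_real, qHermite_eval hq0 hq1 (mul_inv_cancel₀ hz0) hsum]
  refine (norm_sum_le_of_le _ (n := fun _ => 1 / qPochInfA q q ^ 2) fun ij _ => ?_).trans ?_
  · rw [norm_mul, norm_mul, norm_pow, norm_pow, norm_inv, hz1, norm_div, norm_mul,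
      Complex.norm_real, Complex.norm_real, Complex.norm_real,
      Real.norm_of_nonneg (qFact_pos hq0 hq1 _).le, Real.norm_of_nonneg (qFact_pos hq0 hq1 _).le,
      Real.norm_of_nonneg (qFact_pos hq0 hq1 _).le]
    simp only [one_pow, inv_one, mul_one]
    rw [pow_two]
    have h1 := qPochInfA_le_qFact hq0 hq1 ij.1
    have h2 := qPochInfA_le_qFact hq0 hq1 ij.2
    have h3 := qFact_le_one hq0 hq1 n
    have h4 := (qFact_pos hq0 hq1 ij.1).le
    gcongr
  · rw [Finset.sum_const, Finset.Nat.card_antidiagonal, nsmul_eq_mul]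
    push_cast
    rw [mul_one_div]

lemma exists_abs_qWave_le {q : ℝ} (hq0 : 0 < q) (hq1 : q < 1) :
    ∃ C, 0 ≤ C ∧ ∀ n x, |qWave q n x| ≤ C * (n + 1) := by
  obtain ⟨B, hB0, hB⟩ := exists_qWeight_le hq0 hq1
  have hQ := qPochInfA_pos hq0 hq1
  have h0 : 0 ≤ (1 - q) / 2 := by linarith
  refine ⟨((1 - q) / 2) ^ ((1 : ℝ) / 4) * √(1 / (2 * π)) * √B / qPochInfA q q ^ 2,
    by positivity, fun n x => ?_⟩
  rcases le_or_gt |x| 1 with hx | hx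
  · have hP := qFact_pos hq0 hq1 n
    have hPQ := qFact_mul_qPochInfA hq0 hq1 n
    have hle : qPochInfA (q ^ (n + 1)) q ≤ 1 := by
      have := qPochInfA_le_qFact hq0 hq1 n
      rw [← hPQ] at this
      exact le_of_mul_le_mul_left (by linarith) hP
    rw [qWave, abs_mul, abs_of_nonneg (by positivity)]
    calc _ ≤ ((1 - q) / 2) ^ ((1 : ℝ) / 4) * √(1 / (2 * π)) * √B *
          ((n + 1) / qPochInfA q q ^ 2) := by
          have := abs_qHermite_eval_le_s18 hq0 hq1 n hx
          have := hB x
          gcongr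
      _ = _ := by ring
  · rw [qWave, qWeight_eq_zero hx]
    simp
    positivity

lemma summable_norm_pow_mul {r : ℝ} (hr0 : 0 ≤ r) (hr : r < 1) (C : ℝ) :
    Summable fun n : ℕ => r ^ n * (C * (n + 1)) * (C * (n + 1)) := by
  have hr' : ‖r‖ < 1 := by rwa [Real.norm_of_nonneg hr0]
  have h := (((summable_pow_mul_geometric_of_norm_lt_one 2 hr').add
    ((summable_pow_mul_geometric_of_norm_lt_one 1 hr').mul_left 2)).add
    (summable_pow_mul_geometric_of_norm_lt_one 0 hr')).mul_left (C ^ 2)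
  refine h.congr fun n => ?_
  ring

lemma exists_kernel_bound {q : ℝ} (hq0 : 0 < q) (hq1 : q < 1) {t : ℂ} (ht : ‖t‖ < 1) :
    ∃ b : ℕ → ℝ, Summable b ∧
      ∀ n x y, ‖t ^ n * (qWave q n x : ℂ) * (qWave q n y : ℂ)‖ ≤ b n := by
  obtain ⟨C, hC0, hC⟩ := exists_abs_qWave_le hq0 hq1
  refine ⟨_, summable_norm_pow_mul (norm_nonneg t) ht C, fun n x y => ?_⟩
  rw [norm_mul, norm_mul, norm_pow, Complex.norm_real, Complex.norm_real]
  have h1 := hC n x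
  have h2 := hC n y
  rw [← Real.norm_eq_abs] at h1 h2
  gcongr

lemma hasSum_kernel {q : ℝ} (hq0 : 0 < q) (hq1 : q < 1) {t : ℂ} (ht : ‖t‖ < 1) (x y : ℝ) :
    HasSum (fun n => t ^ n * (qWave q n x : ℂ) * (qWave q n y : ℂ))
      (∑' n, t ^ n * (qWave q n x : ℂ) * (qWave q n y : ℂ)) := by
  obtain ⟨b, hb, hle⟩ := exists_kernel_bound hq0 hq1 ht
  exact (Summable.of_norm_bounded hb fun n => hle n x y).hasSum

lemma exists_norm_qKernel_le {q : ℝ} (hq0 : 0 < q) (hq1 : q < 1) {t : ℂ} (ht : ‖t‖ < 1) :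
    ∃ M, ∀ x y, ‖qKernel q t x y‖ ≤ M := by
  obtain ⟨b, hb, hle⟩ := exists_kernel_bound hq0 hq1 ht
  refine ⟨‖(√(2 / (1 - q)) : ℂ)‖ * ∑' n, b n, fun x y => ?_⟩
  rw [qKernel, norm_mul]
  gcongr
  exact tsum_of_norm_bounded hb.hasSum fun n => hle n x y

lemma measurable_qKernel {q : ℝ} (hq0 : 0 < q) (hq1 : q < 1) {t : ℂ} (ht : ‖t‖ < 1) (x : ℝ) :
    Measurable (qKernel q t x) := by
  refine Measurable.const_mul ?_ _
  refine measurable_of_tendsto_metrizable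
    (f := fun N y => ∑ n ∈ Finset.range N, t ^ n * (qWave q n x : ℂ) * (qWave q n y : ℂ))
    (fun N => ?_) (tendsto_pi_nhds.2 fun y => (hasSum_kernel hq0 hq1 ht x y).tendsto_sum_nat)
  refine Finset.measurable_fun_sum _ fun n _ => ?_
  have := measurable_qWave hq0 hq1 n
  fun_prop

lemma qKernel_comm (q : ℝ) (t : ℂ) (x y : ℝ) : qKernel q t x y = qKernel q t y x := by
  simp only [qKernel, mul_right_comm]

lemma conj_qKernel (q : ℝ) (t : ℂ) (x y : ℝ) :
    (starRingEnd ℂ) (qKernel q t x y) = qKernel q ((starRingEnd ℂ) t) x y := by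
  simp [qKernel, Complex.conj_tsum]

/-- Termwise integration of the `q`-Poisson kernel against a bounded function. -/
lemma integral_qKernel_mul {q : ℝ} (hq0 : 0 < q) (hq1 : q < 1) {t : ℂ} (ht : ‖t‖ < 1) (x : ℝ)
    {g : ℝ → ℂ} (hg : Measurable g) {M : ℝ} (hM : ∀ y, ‖g y‖ ≤ M) :
    ∫ y in (-1 : ℝ)..1, qKernel q t x y * g y = (√(2 / (1 - q)) : ℂ) *
      ∑' n, t ^ n * (qWave q n x : ℂ) * ∫ y in (-1 : ℝ)..1, (qWave q n y : ℂ) * g y := by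
  obtain ⟨b, hb, hle⟩ := exists_kernel_bound hq0 hq1 ht
  have key := intervalIntegral.hasSum_integral_of_dominated_convergence
    (μ := MeasureTheory.volume) (a := -1) (b := 1)
    (F := fun n y => t ^ n * (qWave q n x : ℂ) * (qWave q n y : ℂ) * g y)
    (f := fun y => (∑' n, t ^ n * (qWave q n x : ℂ) * (qWave q n y : ℂ)) * g y)
    (fun n _ => b n * M) (fun n => ?_) (fun n => ?_) ?_ ?_ ?_
  · simp_rw [mul_assoc (_ * _) (Complex.ofReal (qWave q _ _)),
      intervalIntegral.integral_const_mul] at key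
    rw [key.tsum_eq, ← intervalIntegral.integral_const_mul]
    simp only [qKernel, mul_assoc]
  · have := measurable_qWave hq0 hq1 n
    exact Measurable.aestronglyMeasurable (by fun_prop)
  · refine .of_forall fun y _ => ?_
    rw [norm_mul]
    exact mul_le_mul (hle n x y) (hM y) (norm_nonneg _) ((norm_nonneg _).trans (hle n x y))
  · exact .of_forall fun y _ => hb.mul_right M
  · exact intervalIntegrable_const
  · exact .of_forall fun y _ => (hasSum_kernel hq0 hq1 ht x y).mul_right _

lemma integral_qKernel_mul_qWave {q : ℝ} (hq0 : 0 < q) (hq1 : q < 1) {t : ℂ} (ht : ‖t‖ < 1)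
    (x : ℝ) (m : ℕ) :
    ∫ y in (-1 : ℝ)..1, qKernel q t x y * (qWave q m y : ℂ) = t ^ m * (qWave q m x : ℂ) := by
  obtain ⟨C, -, hC⟩ := exists_abs_qWave_le hq0 hq1
  rw [integral_qKernel_mul hq0 hq1 ht x (measurable_qWave hq0 hq1 m).complex_ofReal
    (M := C * (m + 1)) fun y => by rw [Complex.norm_real]; exact hC m y]
  have horth : ∀ n, ∫ y in (-1 : ℝ)..1, (qWave q n y : ℂ) * (qWave q m y : ℂ)
      = if n = m then (√((1 - q) / 2) : ℂ) else 0 := by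
    intro n
    simp_rw [← Complex.ofReal_mul]
    rw [intervalIntegral.integral_ofReal, integral_qWave_mul_qWave hq0 hq1]
    split_ifs <;> simp
  simp_rw [horth]
  rw [tsum_eq_single m fun n hn => by rw [if_neg hn, mul_zero], if_pos rfl]
  have hα : (√(2 / (1 - q)) : ℂ) * (√((1 - q) / 2) : ℂ) = 1 := by
    have h1 : 0 < 1 - q := by linarith
    rw [← Complex.ofReal_mul, ← Real.sqrt_mul (by positivity),
      show 2 / (1 - q) * ((1 - q) / 2) = 1 by field_simp]
    simp
  linear_combination (t ^ m * (qWave q m x : ℂ)) * hα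

/-- The semigroup property of the `q`-Poisson kernel. -/
lemma integral_qKernel_mul_qKernel {q : ℝ} (hq0 : 0 < q) (hq1 : q < 1) {s t : ℂ} (hs : ‖s‖ < 1)
    (ht : ‖t‖ < 1) (x x' : ℝ) :
    ∫ y in (-1 : ℝ)..1, qKernel q s x y * qKernel q t y x' = qKernel q (s * t) x x' := by
  obtain ⟨M, hM⟩ := exists_norm_qKernel_le hq0 hq1 ht
  simp_rw [qKernel_comm q t _ x']
  rw [integral_qKernel_mul hq0 hq1 hs x (measurable_qKernel hq0 hq1 ht x') (hM x')]
  simp_rw [mul_comm (Complex.ofReal _) (qKernel q t x' _),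
    integral_qKernel_mul_qWave hq0 hq1 ht]
  rw [qKernel]
  congr 1
  exact tsum_congr fun n => by rw [mul_pow]; ring

lemma integral_qKernel_mul_sum {q : ℝ} (hq0 : 0 < q) (hq1 : q < 1) {t : ℂ} (ht : ‖t‖ < 1)
    (x : ℝ) (N : ℕ) (d : ℕ → ℂ) :
    ∫ y in (-1 : ℝ)..1, qKernel q t x y * ∑ n ∈ Finset.range N, d n * (qWave q n y : ℂ)
      = ∑ n ∈ Finset.range N, d n * t ^ n * (qWave q n x : ℂ) := by
  obtain ⟨M, hM⟩ := exists_norm_qKernel_le hq0 hq1 ht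
  obtain ⟨C, -, hC⟩ := exists_abs_qWave_le hq0 hq1
  have hK := measurable_qKernel hq0 hq1 ht x
  have e : ∀ y, qKernel q t x y * ∑ n ∈ Finset.range N, d n * (qWave q n y : ℂ)
      = ∑ n ∈ Finset.range N, d n * (qKernel q t x y * (qWave q n y : ℂ)) := by
    intro y
    rw [Finset.mul_sum]
    exact Finset.sum_congr rfl fun n _ => by ring
  simp_rw [e]
  rw [intervalIntegral.integral_finsetSum fun n _ => ?_]
  · simp_rw [intervalIntegral.integral_const_mul, integral_qKernel_mul_qWave hq0 hq1 ht, mul_assoc]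
  · have hψ := measurable_qWave hq0 hq1 n
    refine (intervalIntegrable_of_measurable_of_bound (by fun_prop) (M := M * (C * (n + 1)))
      fun y _ => ?_).const_mul _
    rw [norm_mul, Complex.norm_real]
    exact mul_le_mul (hM x y) (hC n y) (norm_nonneg _) ((norm_nonneg _).trans (hM x y))

/-- Inversion relation for the q-Fourier kernel, and recovery of finite linear
combinations of the wave functions in the limit `r, r' → 1⁻`. -/
theorem qKernel_inversion (q : ℝ) (hq0 : 0 < q) (hq1 : q < 1) :
    (∀ (r r' : ℝ), |r| < 1 → |r'| < 1 → ∀ x x' : ℝ,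
      ∫ y in (-1 : ℝ)..1,
          qKernel q (Complex.I * r) x y *
            (starRingEnd ℂ) (qKernel q (Complex.I * r') y x') =
        qKernel q ((r : ℂ) * (r' : ℂ)) x x') ∧
    (∀ (N : ℕ) (c : ℕ → ℝ) (x : ℝ),
      Filter.Tendsto
        (fun p : ℝ × ℝ =>
          ∫ y in (-1 : ℝ)..1,
            (starRingEnd ℂ) (qKernel q (Complex.I * p.2) x y) *
              ∫ z in (-1 : ℝ)..1,
                qKernel q (Complex.I * p.1) y z *
                  ((∑ n ∈ Finset.range N, c n * qWave q n z : ℝ) : ℂ))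
        ((nhdsWithin 1 (Set.Iio 1)) ×ˢ (nhdsWithin 1 (Set.Iio 1)))
        (nhds ((∑ n ∈ Finset.range N, c n * qWave q n x : ℝ) : ℂ))) := by
  have hnorm : ∀ r : ℝ, |r| < 1 → ‖Complex.I * (r : ℂ)‖ < 1 := fun r hr => by simpa using hr
  have hnorm' : ∀ r : ℝ, |r| < 1 → ‖(starRingEnd ℂ) (Complex.I * (r : ℂ))‖ < 1 := fun r hr => by
    rw [RCLike.norm_conj]
    exact hnorm r hr
  have hmul : ∀ r r' : ℝ, Complex.I * (r : ℂ) * (starRingEnd ℂ) (Complex.I * (r' : ℂ))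
      = (r : ℂ) * (r' : ℂ) := fun r r' => by
    rw [map_mul, Complex.conj_I, Complex.conj_ofReal]
    linear_combination (-(r : ℂ) * r') * Complex.I_mul_I
  refine ⟨fun r r' hr hr' x x' => ?_, fun N c x => ?_⟩
  · simp_rw [conj_qKernel]
    rw [integral_qKernel_mul_qKernel hq0 hq1 (hnorm r hr) (hnorm' r' hr'), hmul]
  · have hlt : ∀ᶠ r : ℝ in nhdsWithin 1 (Set.Iio 1), |r| < 1 := by
      filter_upwards [self_mem_nhdsWithin, mem_nhdsWithin_of_mem_nhds (Ioi_mem_nhds zero_lt_one)]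
        with r h1 h0
      exact abs_lt.2 ⟨by linarith [Set.mem_Ioi.1 h0], h1⟩
    have hcont : Continuous fun p : ℝ × ℝ =>
        ((∑ n ∈ Finset.range N, c n * (p.1 * p.2) ^ n * qWave q n x : ℝ) : ℂ) := by fun_prop
    have hle : (nhdsWithin (1 : ℝ) (Set.Iio 1)) ×ˢ (nhdsWithin (1 : ℝ) (Set.Iio 1))
        ≤ nhds ((1 : ℝ), (1 : ℝ)) := by
      rw [nhds_prod_eq]
      exact Filter.prod_mono nhdsWithin_le_nhds nhdsWithin_le_nhds
    have hlim := (hcont.tendsto (1, 1)).mono_left hle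
    simp only [mul_one, one_pow] at hlim
    refine hlim.congr' ?_
    filter_upwards [hlt.prod_mk hlt] with p hp
    simp_rw [conj_qKernel, Complex.ofReal_sum, Complex.ofReal_mul (c _),
      integral_qKernel_mul_sum hq0 hq1 (hnorm _ hp.1),
      integral_qKernel_mul_sum hq0 hq1 (hnorm' _ hp.2)]
    refine Finset.sum_congr rfl fun n _ => ?_
    rw [mul_assoc (c n : ℂ), ← mul_pow, hmul]
    push_cast
    ring
end
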